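/- Let $N\ge 2$, let $\Omega\subset\mathbb R^N$ be a bounded domain with smooth boundary, let $1<p<\infty$ and $1\le q<p_*$, where $p_*=p(N-1)/(N-p)$ if $p<N$ and $p_*=\infty$ if $p\ge N$. Let $\mathcal H^{N-1}$ be the $(N-1)$-dimensional Hausdorff measure, and let boundary values of Sobolev functions be understood in the sense of traces. Put $\mathcal X:=W^{1,p}(\Omega)\setminus W^{1,p}_0(\Omega)$ and, for $\mathcal H^{N-1}$-measurable $\Gamma\subset\partial\Omega$, $\mathcal X_\Gamma:=\{u\in\mathcal X: u=0\ \mathcal H^{N-1}\text{-a.e. on }\Gamma\}$, $$S(\Gamma):=\inf_{u\in\mathcal X_\Gamma}\frac{\int_\Omega |\nabla u|^p+|u|^p\,dx}{\left(\int_{\partial\Omega}|u|^q\,d\mathcal H^{N-1}\right)^{p/q}}\qquad(\inf\emptyset=\infty),$$ and, for $0<\alpha<1$, $$\mathcal S(\alpha):=\inf\{S(\Gamma):\Gamma\subset\partial\Omega\ \ \mathcal H^{N-1}\text{-measurable},\ \mathcal H^{N-1}(\Gamma)=\alpha\,\mathcal H^{N-1}(\partial\Omega)\}.$$ Then for every $\alpha\in(0,1)$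 there exists $u\in\mathcal X$ with $\mathcal H^{N-1}(\{x\in\partial\Omega: u(x)=0\})\ge\alpha\,\mathcal H^{N-1}(\partial\Omega)$ such that $$\mathcal S(\alpha)=\frac{\|u\|^p_{W^{1,p}(\Omega)}}{\|u\|^p_{L^q(\partial\Omega)}},$$ where $\|u\|^p_{W^{1,p}(\Omega)}=\int_\Omega|\nabla u|^p+|u|^p\,dx$ and $\|u\|_{L^q(\partial\Omega)}=\left(\int_{\partial\Omega}|u|^q\,d\mathcal H^{N-1}\right)^{1/q}$. -/

import Mathlib

open MeasureTheory Set Filter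
open scoped ENNReal Topology ContDiff RealInnerProductSpace

noncomputable section

/-- `N`-dimensional Euclidean space. -/
abbrev Euc (N : ℕ) : Type := EuclideanSpace ℝ (Fin N)

/-- The boundary of `Ω` is smooth: near each boundary point, `Ω` is the sublevel set `{f < 0}` of a
smooth function whose gradient does not vanish at that point. -/
def HasSmoothBoundary {N : ℕ} (Ω : Set (Euc N)) : Prop :=
  ∀ x ∈ frontier Ω, ∃ (U : Set (Euc N)) (f : Euc N → ℝ), IsOpen U ∧ x ∈ U ∧
    ContDiff ℝ ∞ f ∧ gradient f x ≠ 0 ∧ Ω ∩ U = {y ∈ U | f y < 0}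

/-- The surface measure `H^{N-1}` restricted to `∂Ω`. -/
def surf {N : ℕ} (Ω : Set (Euc N)) : Measure (Euc N) :=
  (μH[(N : ℝ) - 1]).restrict (frontier Ω)

/-- `g` is the weak gradient of `u` in `Ω`. -/
def IsWeakGradient {N : ℕ} (Ω : Set (Euc N)) (u : Euc N → ℝ) (g : Euc N → Euc N) : Prop :=
  ∀ φ : Euc N → ℝ, ContDiff ℝ ∞ φ → HasCompactSupport φ → tsupport φ ⊆ Ω →
    ∀ v : Euc N, ∫ x in Ω, u x * fderiv ℝ φ x v = - ∫ x in Ω, φ x * ⟪g x, v⟫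

/-- `u ∈ W^{1,p}(Ω)`, with weak gradient `g`. -/
def MemW1p {N : ℕ} (Ω : Set (Euc N)) (p : ℝ) (u : Euc N → ℝ) (g : Euc N → Euc N) : Prop :=
  MemLp u (ENNReal.ofReal p) (volume.restrict Ω) ∧
    MemLp g (ENNReal.ofReal p) (volume.restrict Ω) ∧ IsWeakGradient Ω u g

/-- The differentiable functions `φ n` converge in `W^{1,p}(Ω)` to `u`, whose weak gradient
is `g`. -/
def TendstoW1p {N : ℕ} (Ω : Set (Euc N)) (p : ℝ) (φ : ℕ → Euc N → ℝ)
    (u : Euc N → ℝ) (g : Euc N → Euc N) : Prop :=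
  Tendsto (fun n => eLpNorm (fun x => φ n x - u x) (ENNReal.ofReal p) (volume.restrict Ω))
      atTop (𝓝 0) ∧
    Tendsto (fun n => eLpNorm (fun x => gradient (φ n) x - g x) (ENNReal.ofReal p)
      (volume.restrict Ω)) atTop (𝓝 0)

/-- `u ∈ W^{1,p}_0(Ω)`, the closure of `C_c^∞(Ω)` in `W^{1,p}(Ω)`; `g` is the weak gradient. -/
def MemW1p0 {N : ℕ} (Ω : Set (Euc N)) (p : ℝ) (u : Euc N → ℝ) (g : Euc N → Euc N) : Prop :=
  MemW1p Ω p u g ∧ ∃ φ : ℕ → Euc N → ℝ,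
    (∀ n, ContDiff ℝ ∞ (φ n) ∧ HasCompactSupport (φ n) ∧ tsupport (φ n) ⊆ Ω) ∧
    TendstoW1p Ω p φ u g

/-- `T` is (a representative of) the trace on `∂Ω` of `u ∈ W^{1,p}(Ω)`: the limit in `L^p(∂Ω)` of
the boundary values of functions smooth up to the boundary that converge to `u` in
`W^{1,p}(Ω)`. The values of `T` off `∂Ω` play no role. -/
def IsTrace {N : ℕ} (Ω : Set (Euc N)) (p : ℝ) (u : Euc N → ℝ) (g : Euc N → Euc N)
    (T : Euc N → ℝ) : Prop :=
  MemLp T (ENNReal.ofReal p) (surf Ω) ∧ ∃ φ : ℕ → Euc N → ℝ,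
    (∀ n, ContDiff ℝ ∞ (φ n)) ∧ TendstoW1p Ω p φ u g ∧
    Tendsto (fun n => eLpNorm (fun x => φ n x - T x) (ENNReal.ofReal p) (surf Ω)) atTop (𝓝 0)

/-- `u` is admissible, i.e. `u ∈ W^{1,p}(Ω) \ W^{1,p}_0(Ω)`; here `g` is its weak gradient and `T`
its trace. -/
def Admissible {N : ℕ} (Ω : Set (Euc N)) (p : ℝ) (u : Euc N → ℝ) (g : Euc N → Euc N)
    (T : Euc N → ℝ) : Prop :=
  MemW1p Ω p u g ∧ ¬ MemW1p0 Ω p u g ∧ IsTrace Ω p u g T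

/-- `∫_Ω |∇u|^p + |u|^p dx`. -/
def sobolevEnergy {N : ℕ} (Ω : Set (Euc N)) (p : ℝ) (u : Euc N → ℝ) (g : Euc N → Euc N) : ℝ≥0∞ :=
  ∫⁻ x in Ω, (‖g x‖ₑ ^ p + ‖u x‖ₑ ^ p)

/-- `∫_{∂Ω} |T|^q dH^{N-1}`. -/
def bdryLqPow {N : ℕ} (Ω : Set (Euc N)) (q : ℝ) (T : Euc N → ℝ) : ℝ≥0∞ :=
  ∫⁻ x, ‖T x‖ₑ ^ q ∂(surf Ω)

/-- `(∫_Ω |∇u|^p + |u|^p dx) / (∫_{∂Ω} |T|^q dH^{N-1})^{p/q}`. -/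
def rayleighQuot {N : ℕ} (Ω : Set (Euc N)) (p q : ℝ) (u : Euc N → ℝ) (g : Euc N → Euc N)
    (T : Euc N → ℝ) : ℝ≥0∞ :=
  sobolevEnergy Ω p u g / (bdryLqPow Ω q T) ^ (p / q)

/-- `S(Γ)`: the infimum of the quotient over the admissible functions whose trace vanishes
`H^{N-1}`-a.e. on `Γ` (it is `∞` if there are none). -/
def traceConst {N : ℕ} (Ω : Set (Euc N)) (p q : ℝ) (Γ : Set (Euc N)) : ℝ≥0∞ :=
  sInf {r | ∃ u g T, Admissible Ω p u g T ∧
    (∀ᵐ x ∂(μH[(N : ℝ) - 1] : Measure (Euc N)), x ∈ Γ → T x = 0) ∧ r = rayleighQuot Ω p q u g T}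

/-- `𝒮(α)`: the infimum of `S(Γ)` over the `H^{N-1}`-measurable sets `Γ ⊆ ∂Ω` with
`H^{N-1}(Γ) = α H^{N-1}(∂Ω)`. -/
def optTraceConst {N : ℕ} (Ω : Set (Euc N)) (p q α : ℝ) : ℝ≥0∞ :=
  sInf {r | ∃ Γ : Set (Euc N), Γ ⊆ frontier Ω ∧
    NullMeasurableSet Γ (μH[(N : ℝ) - 1] : Measure (Euc N)) ∧
    μH[(N : ℝ) - 1] Γ = ENNReal.ofReal α * μH[(N : ℝ) - 1] (frontier Ω) ∧
    r = traceConst Ω p q Γ}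

end

noncomputable section

lemma frontier_disjoint_of_isOpen {N : ℕ} {Ω : Set (Euc N)} (hΩ : IsOpen Ω) {x : Euc N}
    (hx : x ∈ frontier Ω) : x ∉ Ω := by
  rw [hΩ.frontier_eq] at hx
  exact hx.2

/-- Uniform interior and exterior cone condition near a boundary point, with cone
`{t • y | 0 < t < R, y ∈ ball e ρ}`. -/
lemma HasSmoothBoundary.exists_cone {N : ℕ} {Ω : Set (Euc N)} (hΩ : IsOpen Ω)
    (hs : HasSmoothBoundary Ω) {x₀ : Euc N} (hx₀ : x₀ ∈ frontier Ω) :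
    ∃ (e : Euc N) (ρ R : ℝ), ‖e‖ = 1 ∧ 0 < ρ ∧ ρ < 1 ∧ 0 < R ∧
      ∀ x ∈ frontier Ω, dist x x₀ < R → ∀ y ∈ Metric.ball e ρ, ∀ t, 0 < t → t < R →
        x + t • y ∈ Ω ∧ x - t • y ∉ Ω := by
  obtain ⟨U, f, hU, hxU, hf, hgrad, hΩU⟩ := hs x₀ hx₀
  have hmem : ∀ y ∈ U, (y ∈ Ω ↔ f y < 0) := by
    intro y hy
    have : y ∈ Ω ∩ U ↔ y ∈ {y ∈ U | f y < 0} := by rw [hΩU]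
    simp only [mem_inter_iff, mem_ofPred_eq, hy, and_true, true_and] at this
    exact this
  have hzero : ∀ x ∈ frontier Ω, x ∈ U → f x = 0 := by
    intro x hx hxU'
    apply le_antisymm
    · by_contra! hpos
      have hopen : IsOpen (U ∩ f ⁻¹' Ioi 0) := hU.inter (isOpen_Ioi.preimage hf.continuous)
      obtain ⟨y, hy, hyΩ⟩ := mem_closure_iff.1 (frontier_subset_closure hx) _ hopen ⟨hxU', hpos⟩
      exact absurd ((hmem y hy.1).1 hyΩ) (not_lt.2 (le_of_lt hy.2))
    · by_contra! hneg
      exact frontier_disjoint_of_isOpen hΩ hx ((hmem x hxU').2 hneg)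
  set v := gradient f x₀ with hv
  have hvpos : 0 < ‖v‖ := norm_pos_iff.2 hgrad
  have hfd : ∀ w, fderiv ℝ f x₀ w = ⟪v, w⟫ := by
    intro w
    rw [hv, gradient, InnerProductSpace.toDual_symm_apply]
  set a := ‖v‖
  have hdiff : Differentiable ℝ f := hf.differentiable (by simp)
  have hcont : Continuous (fderiv ℝ f) := hf.continuous_fderiv (by simp)
  have hnear : ∀ᶠ z in 𝓝 x₀, z ∈ U ∧ ‖fderiv ℝ f z - fderiv ℝ f x₀‖ < a / 4 := by
    refine (hU.eventually_mem hxU).and ?_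
    have := hcont.tendsto x₀
    rw [Metric.tendsto_nhds] at this
    simpa [dist_eq_norm] using this (a / 4) (by positivity)
  obtain ⟨δ, hδ, hball⟩ := Metric.eventually_nhds_iff.1 hnear
  set e : Euc N := -(a⁻¹ • v) with he
  have hen : ‖e‖ = 1 := by
    rw [he, norm_neg, norm_smul, norm_inv, norm_norm]; exact inv_mul_cancel₀ hvpos.ne'
  have hde : fderiv ℝ f x₀ e = -a := by
    rw [hfd, he, inner_neg_right, inner_smul_right, real_inner_self_eq_norm_sq]
    field_simp
    rfl
  have hDn : ‖fderiv ℝ f x₀‖ ≤ a := by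
    refine ContinuousLinearMap.opNorm_le_bound _ hvpos.le fun w => ?_
    rw [hfd]; exact abs_real_inner_le_norm _ _
  have hyn : ∀ y ∈ Metric.ball e (1 / 4), ‖y‖ ≤ 5 / 4 := by
    intro y hy
    have : ‖y - e‖ < 1 / 4 := by simpa [dist_eq_norm] using hy
    calc ‖y‖ = ‖e + (y - e)‖ := by congr 1; abel
      _ ≤ ‖e‖ + ‖y - e‖ := norm_add_le _ _
      _ ≤ 5 / 4 := by rw [hen]; linarith
  have hdecr : ∀ z, dist z x₀ < δ → ∀ y ∈ Metric.ball e (1 / 4), fderiv ℝ f z y < 0 := by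
    intro z hz y hy
    have h1 : ‖y - e‖ < 1 / 4 := by simpa [dist_eq_norm] using hy
    have h2 : fderiv ℝ f z y = fderiv ℝ f x₀ e + fderiv ℝ f x₀ (y - e) +
        (fderiv ℝ f z - fderiv ℝ f x₀) y := by
      simp only [map_sub, _root_.sub_apply]; ring
    have h3 : fderiv ℝ f x₀ (y - e) ≤ a * (1 / 4) :=
      (le_abs_self _).trans (((fderiv ℝ f x₀).le_opNorm _).trans
        (mul_le_mul hDn h1.le (norm_nonneg _) hvpos.le))
    have h4 : (fderiv ℝ f z - fderiv ℝ f x₀) y ≤ a / 4 * (5 / 4) :=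
      (le_abs_self _).trans (((fderiv ℝ f z - fderiv ℝ f x₀).le_opNorm _).trans
        (mul_le_mul (hball hz).2.le (hyn y hy) (norm_nonneg _) (by positivity)))
    rw [h2, hde]; linarith
  have hline : ∀ x y : Euc N, ∀ s : ℝ,
      HasDerivAt (fun s : ℝ => f (x + s • y)) (fderiv ℝ f (x + s • y) y) s := by
    intro x y s
    have h1 : HasDerivAt (fun s : ℝ => x + s • y) y s := by
      simpa using ((hasDerivAt_id s).smul_const y).const_add x
    exact (hdiff (x + s • y)).hasFDerivAt.comp_hasDerivAt s h1
  refine ⟨e, 1 / 4, δ / 3, hen, by norm_num, by norm_num, by positivity, ?_⟩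
  intro x hx hxd y hy t ht htR
  have hclose : ∀ s : ℝ, |s| ≤ t → dist (x + s • y) x₀ < δ := by
    intro s hs
    have : dist (x + s • y) x₀ ≤ dist (x + s • y) x + dist x x₀ := dist_triangle _ _ _
    have h5 : dist (x + s • y) x = |s| * ‖y‖ := by
      rw [dist_eq_norm, add_sub_cancel_left, norm_smul, Real.norm_eq_abs]
    have h6 : |s| * ‖y‖ ≤ δ / 3 * (5 / 4) :=
      mul_le_mul (hs.trans htR.le) (hyn y hy) (norm_nonneg _) (by positivity)
    rw [h5] at this
    linarith
  have hfx : f x = 0 := hzero x hx (hball (by simpa using hclose 0 (by simpa using ht.le))).1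
  constructor
  · rw [hmem _ (hball (hclose t (abs_of_pos ht).le)).1]
    obtain ⟨c, hc, hc'⟩ := exists_hasDerivAt_eq_slope (fun s : ℝ => f (x + s • y))
      (fun s => fderiv ℝ f (x + s • y) y) ht
      (fun s _ => (hline x y s).continuousAt.continuousWithinAt) (fun s _ => hline x y s)
    have hneg := hdecr _ (hclose c (by rw [abs_of_pos hc.1]; exact hc.2.le)) y hy
    rw [hc'] at hneg
    simp only [zero_smul, add_zero, hfx, sub_zero] at hneg
    by_contra! hh
    exact absurd (div_nonneg hh ht.le) (not_le.2 hneg)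
  · have hin := hball (hclose (-t) (by rw [abs_neg]; exact (abs_of_pos ht).le))
    rw [neg_smul, ← sub_eq_add_neg] at hin
    rw [hmem _ hin.1, not_lt]
    obtain ⟨c, hc, hc'⟩ := exists_hasDerivAt_eq_slope (fun s : ℝ => f (x + s • y))
      (fun s => fderiv ℝ f (x + s • y) y) (neg_lt_zero.2 ht)
      (fun s _ => (hline x y s).continuousAt.continuousWithinAt) (fun s _ => hline x y s)
    have hneg := hdecr _ (hclose c (by
      rw [abs_of_neg hc.2]; linarith [hc.1])) y hy
    rw [hc'] at hneg
    simp only [zero_smul, add_zero, hfx, neg_smul, ← sub_eq_add_neg, sub_neg_eq_add, zero_add,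
      zero_sub] at hneg
    by_contra! hh
    exact absurd (div_nonneg (neg_nonneg.2 hh.le) ht.le) (not_le.2 hneg)

/-- The orthogonal projection onto `e^⊥` is antilipschitz on a boundary patch. -/
lemma norm_le_of_cone {N : ℕ} {Ω : Set (Euc N)} (hΩ : IsOpen Ω) {e x₀ : Euc N} {ρ R : ℝ}
    (he : ‖e‖ = 1) (hρ : 0 < ρ)
    (hcone : ∀ x ∈ frontier Ω, dist x x₀ < R → ∀ y ∈ Metric.ball e ρ, ∀ t, 0 < t → t < R →
        x + t • y ∈ Ω) {x x' : Euc N} (hx : x ∈ frontier Ω) (hx' : x' ∈ frontier Ω)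
    (hxR : dist x x₀ < R / 4) (hxR' : dist x' x₀ < R / 4) :
    ‖x' - x‖ ≤ (1 + ρ⁻¹) * ‖(x' - x) - ⟪e, x' - x⟫ • e‖ := by
  have hR : 0 < R := by linarith [dist_nonneg (x := x) (y := x₀)]
  have main : ∀ z z' : Euc N, z ∈ frontier Ω → z' ∈ frontier Ω → dist z x₀ < R / 4 →
      dist z' x₀ < R / 4 → 0 < ⟪e, z' - z⟫ →
      ρ * ⟪e, z' - z⟫ ≤ ‖(z' - z) - ⟪e, z' - z⟫ • e‖ := by
    intro z z' hz hz' hzR hzR' hpos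
    by_contra! hlt
    set s := ⟪e, z' - z⟫
    have hs : s < R := by
      have h1 : s ≤ ‖e‖ * ‖z' - z‖ := real_inner_le_norm _ _
      rw [he, one_mul, ← dist_eq_norm] at h1
      linarith [dist_triangle_right z' z x₀]
    have hmem : s⁻¹ • (z' - z) ∈ Metric.ball e ρ := by
      rw [Metric.mem_ball, dist_eq_norm]
      have : s⁻¹ • (z' - z) - e = s⁻¹ • ((z' - z) - s • e) := by
        rw [smul_sub s⁻¹ (z' - z), smul_smul, inv_mul_cancel₀ hpos.ne', one_smul]
      rw [this, norm_smul, norm_inv, Real.norm_of_nonneg hpos.le, inv_mul_lt_iff₀ hpos, mul_comm]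
      exact hlt
    have := hcone z hz (by linarith) _ hmem s hpos hs
    rw [smul_smul, mul_inv_cancel₀ hpos.ne', one_smul, add_sub_cancel] at this
    exact frontier_disjoint_of_isOpen hΩ hz' this
  have habs : ρ * |⟪e, x' - x⟫| ≤ ‖(x' - x) - ⟪e, x' - x⟫ • e‖ := by
    rcases lt_trichotomy ⟪e, x' - x⟫ 0 with h | h | h
    · have h2 : ⟪e, x - x'⟫ = - ⟪e, x' - x⟫ := by rw [← inner_neg_right, neg_sub]
      have h1 := main x' x hx' hx hxR' hxR (by rw [h2]; linarith)
      rw [h2, ← abs_of_neg h] at h1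
      refine h1.trans_eq ?_
      rw [← norm_neg, abs_of_neg h]
      congr 1
      rw [neg_smul]; abel
    · rw [h]; simp
    · rw [abs_of_pos h]
      exact main x x' hx hx' hxR hxR' h
  set w := (x' - x) - ⟪e, x' - x⟫ • e
  calc ‖x' - x‖ = ‖w + ⟪e, x' - x⟫ • e‖ := by simp [w]
    _ ≤ ‖w‖ + ‖⟪e, x' - x⟫ • e‖ := norm_add_le _ _
    _ = ‖w‖ + |⟪e, x' - x⟫| := by rw [norm_smul, he, mul_one, Real.norm_eq_abs]
    _ ≤ ‖w‖ + ρ⁻¹ * ‖w‖ := by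
        gcongr
        rw [le_inv_mul_iff₀ hρ]; exact habs
    _ = (1 + ρ⁻¹) * ‖w‖ := by ring

open Module in
lemma finrank_orthogonal_euc {N : ℕ} (hN : 2 ≤ N) {e : Euc N} (he : ‖e‖ = 1) :
    finrank ℝ (ℝ ∙ e)ᗮ = N - 1 := by
  have : Fact (finrank ℝ (Euc N) = (N - 1) + 1) := ⟨by
    rw [finrank_euclideanSpace, Fintype.card_fin]; omega⟩
  exact Submodule.finrank_orthogonal_span_singleton (by rintro rfl; simp at he)

open Module in
lemma isAddHaarMeasure_hausdorffMeasure_orthogonal {N : ℕ} (hN : 2 ≤ N) {e : Euc N}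
    (he : ‖e‖ = 1) :
    (μH[(N : ℝ) - 1] : Measure (ℝ ∙ e)ᗮ).IsAddHaarMeasure := by
  have h := finrank_orthogonal_euc hN he
  have : ((finrank ℝ (ℝ ∙ e)ᗮ : ℕ) : ℝ) = (N : ℝ) - 1 := by
    rw [h, Nat.cast_sub (by omega), Nat.cast_one]
  rw [← this]
  infer_instance

lemma norm_orthogonalProjectionOnto_orthogonal {N : ℕ} {e : Euc N} (he : ‖e‖ = 1) (w : Euc N) :
    ‖(ℝ ∙ e)ᗮ.orthogonalProjectionOnto w‖ = ‖w - ⟪e, w⟫ • e‖ := by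
  rw [← Submodule.norm_coe, ← Submodule.starProjection_apply, Submodule.starProjection_orthogonal_val,
    Submodule.starProjection_unit_singleton ℝ he]

/-- Upper Ahlfors regularity of the surface measure on a boundary patch. -/
lemma exists_hausdorffMeasure_patch_le {N : ℕ} (hN : 2 ≤ N) {Ω : Set (Euc N)} (hΩ : IsOpen Ω)
    {e x₀ : Euc N} {ρ R : ℝ} (he : ‖e‖ = 1) (hρ : 0 < ρ)
    (hcone : ∀ x ∈ frontier Ω, dist x x₀ < R → ∀ y ∈ Metric.ball e ρ, ∀ t, 0 < t → t < R →
        x + t • y ∈ Ω) :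
    ∃ C : ℝ≥0∞, C ≠ ⊤ ∧ ∀ (z : Euc N) (t : ℝ), 0 < t →
      μH[(N : ℝ) - 1] (frontier Ω ∩ Metric.ball x₀ (R / 4) ∩ Metric.ball z t) ≤
        C * ENNReal.ofReal (t ^ (N - 1)) := by
  set P := (ℝ ∙ e)ᗮ.orthogonalProjectionOnto
  set A := frontier Ω ∩ Metric.ball x₀ (R / 4)
  have hd : (0 : ℝ) ≤ (N : ℝ) - 1 := by
    have : (2 : ℝ) ≤ N := by exact_mod_cast hN
    linarith
  have hanti : ∀ x ∈ A, ∀ x' ∈ A, dist x x' ≤ (1 + ρ⁻¹) * dist (P x) (P x') := by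
    intro x hx x' hx'
    rw [dist_eq_norm, dist_eq_norm, ← map_sub, norm_orthogonalProjectionOnto_orthogonal he]
    exact norm_le_of_cone hΩ he hρ hcone hx'.1 hx.1 hx'.2 hx.2
  have hinj : InjOn P A := fun x hx x' hx' h => by
    have := hanti x hx x' hx'
    rw [h, dist_self, mul_zero] at this
    exact dist_le_zero.1 this
  set K : NNReal := ⟨1 + ρ⁻¹, by positivity⟩
  have hlip : LipschitzOnWith K (Function.invFunOn P A) (P '' A) := by
    refine LipschitzOnWith.of_dist_le_mul ?_
    rintro _ ⟨x, hx, rfl⟩ _ ⟨x', hx', rfl⟩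
    rw [hinj.leftInvOn_invFunOn hx, hinj.leftInvOn_invFunOn hx']
    exact hanti x hx x' hx'
  have := isAddHaarMeasure_hausdorffMeasure_orthogonal hN he
  refine ⟨(K : ℝ≥0∞) ^ ((N : ℝ) - 1) * μH[(N : ℝ) - 1] (Metric.ball (0 : (ℝ ∙ e)ᗮ) 1), ?_, ?_⟩
  · exact ENNReal.mul_ne_top (ENNReal.rpow_ne_top_of_nonneg hd ENNReal.coe_ne_top)
      measure_ball_lt_top.ne
  · intro z t ht
    have himg : A ∩ Metric.ball z t = Function.invFunOn P A '' (P '' (A ∩ Metric.ball z t)) := by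
      rw [image_image]
      ext x
      simp only [mem_image]
      constructor
      · exact fun hx => ⟨x, hx, hinj.leftInvOn_invFunOn hx.1⟩
      · rintro ⟨y, hy, rfl⟩
        rwa [hinj.leftInvOn_invFunOn hy.1]
    have hsub : P '' (A ∩ Metric.ball z t) ⊆ Metric.ball (P z) t := by
      rintro _ ⟨x, hx, rfl⟩
      have h1 := ((ℝ ∙ e)ᗮ.lipschitzWith_orthogonalProjectionOnto).dist_le_mul x z
      rw [NNReal.coe_one, one_mul] at h1
      exact h1.trans_lt hx.2
    calc μH[(N : ℝ) - 1] (A ∩ Metric.ball z t)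
        = μH[(N : ℝ) - 1] (Function.invFunOn P A '' (P '' (A ∩ Metric.ball z t))) := by
          rw [← himg]
      _ ≤ (K : ℝ≥0∞) ^ ((N : ℝ) - 1) * μH[(N : ℝ) - 1] (P '' (A ∩ Metric.ball z t)) :=
          (hlip.mono (image_mono inter_subset_left)).hausdorffMeasure_image_le hd
      _ ≤ (K : ℝ≥0∞) ^ ((N : ℝ) - 1) * μH[(N : ℝ) - 1] (Metric.ball (P z) t) := by gcongr
      _ = _ := by
          rw [Measure.addHaar_ball_of_pos _ _ ht, finrank_orthogonal_euc hN he]; ring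

lemma IsPreconnected.inter_frontier_nonempty_of_mem {X : Type*} [TopologicalSpace X]
    {s Ω : Set X} (hs : IsPreconnected s) (hΩ : IsOpen Ω) {a b : X} (ha : a ∈ s) (hb : b ∈ s)
    (haΩ : a ∈ Ω) (hbΩ : b ∉ Ω) : (s ∩ frontier Ω).Nonempty := by
  by_contra! hemp
  have hfr : ∀ x ∈ s, x ∉ Ω → x ∈ (closure Ω)ᶜ := fun x hx hxΩ hc => by
    have : x ∈ s ∩ frontier Ω := ⟨hx, by rw [hΩ.frontier_eq]; exact ⟨hc, hxΩ⟩⟩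
    rw [hemp] at this
    exact this
  obtain ⟨x, -, hx, hx'⟩ := hs Ω (closure Ω)ᶜ hΩ isClosed_closure.isOpen_compl
    (fun x hx => by
      by_cases h : x ∈ Ω
      · exact Or.inl h
      · exact Or.inr (hfr x hx h)) ⟨a, ha, haΩ⟩ ⟨b, hb, hfr b hb hbΩ⟩
  exact hx' (subset_closure hx)

/-- Every boundary patch has positive surface measure. -/
lemma hausdorffMeasure_frontier_inter_ball_pos {N : ℕ} (hN : 2 ≤ N) {Ω : Set (Euc N)}
    (hΩ : IsOpen Ω) (hs : HasSmoothBoundary Ω) {x₀ : Euc N} (hx₀ : x₀ ∈ frontier Ω) {s : ℝ}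
    (hs0 : 0 < s) : 0 < μH[(N : ℝ) - 1] (frontier Ω ∩ Metric.ball x₀ s) := by
  obtain ⟨e, ρ, R, he, hρ, hρ1, hR, hcone⟩ := hs.exists_cone hΩ hx₀
  set P := (ℝ ∙ e)ᗮ.orthogonalProjectionOnto
  have hd : (0 : ℝ) ≤ (N : ℝ) - 1 := by
    have : (2 : ℝ) ≤ N := by exact_mod_cast hN
    linarith
  have := isAddHaarMeasure_hausdorffMeasure_orthogonal hN he
  obtain ⟨δ, hδ, hδR, hδs⟩ : ∃ δ : ℝ, 0 < δ ∧ δ < R ∧ 2 * δ < s :=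
    ⟨min (R / 2) (s / 4), by positivity, (min_le_left _ _).trans_lt (by linarith),
      by linarith [min_le_right (R / 2) (s / 4)]⟩
  have hsub : Metric.ball (P x₀) (ρ * δ) ⊆ P '' (frontier Ω ∩ Metric.ball x₀ s) := by
    intro w hw
    set v : (ℝ ∙ e)ᗮ := w - P x₀ with hv
    have hvn : ‖(v : Euc N)‖ < ρ * δ := by
      rw [Submodule.norm_coe, hv, ← dist_eq_norm]; exact hw
    have hvδ : ‖δ⁻¹ • (v : Euc N)‖ < ρ := by
      rw [norm_smul, norm_inv, Real.norm_of_nonneg hδ.le, inv_mul_lt_iff₀ hδ, mul_comm]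
      exact hvn
    have h1 := (hcone x₀ hx₀ (by simpa using hR) (e + δ⁻¹ • (v : Euc N))
      (by simpa [dist_eq_norm] using hvδ) δ hδ hδR).1
    have h2 := (hcone x₀ hx₀ (by simpa using hR) (e - δ⁻¹ • (v : Euc N))
      (by rw [Metric.mem_ball, dist_eq_norm, sub_sub_cancel_left, norm_neg]; exact hvδ)
        δ hδ hδR).2
    rw [smul_add, smul_smul, mul_inv_cancel₀ hδ.ne', one_smul] at h1
    rw [smul_sub, smul_smul, mul_inv_cancel₀ hδ.ne', one_smul] at h2
    set γ : ℝ → Euc N := fun τ => x₀ + (v : Euc N) + τ • e with hγ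
    have hpre : IsPreconnected (γ '' Icc (-δ) δ) :=
      isPreconnected_Icc.image _ (by fun_prop)
    obtain ⟨x, ⟨τ, hτ, rfl⟩, hx⟩ := hpre.inter_frontier_nonempty_of_mem hΩ
      (a := γ δ) (b := γ (-δ)) ⟨δ, ⟨by linarith, le_rfl⟩, rfl⟩ ⟨-δ, ⟨le_rfl, by linarith⟩, rfl⟩
      (by convert h1 using 1; simp only [hγ]; module)
      (by convert h2 using 2; simp only [hγ, neg_smul]; module)
    refine ⟨γ τ, ⟨hx, ?_⟩, ?_⟩
    · rw [Metric.mem_ball, dist_eq_norm]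
      have : γ τ - x₀ = (v : Euc N) + τ • e := by simp only [hγ]; module
      rw [this]
      calc ‖(v : Euc N) + τ • e‖ ≤ ‖(v : Euc N)‖ + ‖τ • e‖ := norm_add_le _ _
        _ ≤ ρ * δ + δ := by
            rw [norm_smul, he, mul_one]
            exact add_le_add hvn.le (abs_le.2 hτ)
        _ < s := by nlinarith
    · simp only [hγ, map_add, map_smul]
      have hPe : P e = 0 := by
        rw [Submodule.orthogonalProjectionOnto_eq_zero_iff, Submodule.orthogonal_orthogonal]
        exact Submodule.mem_span_singleton_self e
      rw [Submodule.orthogonalProjectionOnto_mem_subspace_eq_self, hPe]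
      simp [hv]
  have hpos : 0 < μH[(N : ℝ) - 1] (P '' (frontier Ω ∩ Metric.ball x₀ s)) :=
    (Metric.measure_ball_pos _ (P x₀) (by positivity)).trans_le (measure_mono hsub)
  have hle := ((ℝ ∙ e)ᗮ.lipschitzWith_orthogonalProjectionOnto).hausdorffMeasure_image_le hd
    (frontier Ω ∩ Metric.ball x₀ s)
  rw [ENNReal.coe_one, ENNReal.one_rpow, one_mul] at hle
  exact hpos.trans_le hle

/-- A finite measure without atoms takes all intermediate values on subsets of a given set. -/
lemma exists_measurableSet_subset_measure_eq {X : Type*} [MeasurableSpace X] [StandardBorelSpace X]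
    (μ : Measure X) [IsFiniteMeasure μ] [NullSingletonClass μ] {A : Set X} (hA : MeasurableSet A)
    {c : ℝ≥0∞} (hc : c ≤ μ A) : ∃ B ⊆ A, MeasurableSet B ∧ μ B = c := by
  obtain ⟨f, hf⟩ := exists_measurableEmbedding_real X
  set ν := (μ.restrict A).map f
  have : IsFiniteMeasure ν := Measure.isFiniteMeasure_map _ _
  have hν0 : ∀ x, ν {x} = 0 := by
    intro x
    rw [Measure.map_apply hf.measurable (measurableSet_singleton x)]
    refine le_antisymm ((Measure.restrict_apply_le _ _).trans ?_) (by simp)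
    have : (f ⁻¹' {x}).Subsingleton := fun a ha b hb => hf.injective (ha.trans hb.symm)
    exact (this.measure_zero μ).le
  have hνuniv : ν univ = μ A := by
    rw [Measure.map_apply hf.measurable MeasurableSet.univ]; simp
  have hB : ∀ t, μ (A ∩ f ⁻¹' Iic t) = ν (Iic t) := by
    intro t
    rw [Measure.map_apply hf.measurable measurableSet_Iic,
      Measure.restrict_apply (hf.measurable measurableSet_Iic), inter_comm]
  rcases eq_or_ne c 0 with rfl | hc0
  · exact ⟨∅, empty_subset _, MeasurableSet.empty, measure_empty⟩
  rcases hc.eq_or_lt with rfl | hclt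
  · exact ⟨A, Subset.rfl, hA, rfl⟩
  have hcont : Continuous fun t => ν (Iic t) := by
    refine continuous_iff_continuousAt.2 fun t => ?_
    refine tendsto_measure_of_ae_tendsto_indicator_of_isFiniteMeasure _ measurableSet_Iic
      (fun _ => measurableSet_Iic) ?_
    filter_upwards [compl_mem_ae_iff.2 (hν0 t)] with x hx
    rcases lt_or_gt_of_ne (show x ≠ t from hx) with h | h
    · filter_upwards [lt_mem_nhds h] with s hs
      simp [h.le, hs.le]
    · filter_upwards [gt_mem_nhds h] with s hs
      simp [h.not_ge, hs.not_ge]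
  have hbot : Tendsto (fun t => ν (Iic t)) atBot (𝓝 0) := by
    rw [← measure_empty (μ := ν)]
    refine tendsto_measure_of_ae_tendsto_indicator_of_isFiniteMeasure _ MeasurableSet.empty
      (fun _ => measurableSet_Iic) (ae_of_all _ fun x => ?_)
    filter_upwards [eventually_lt_atBot x] with s hs
    simp [hs]
  have htop : Tendsto (fun t => ν (Iic t)) atTop (𝓝 (μ A)) := by
    rw [← hνuniv]; exact tendsto_measure_Iic_atTop ν
  obtain ⟨a, ha⟩ := (hbot.eventually_lt_const (pos_iff_ne_zero.2 hc0)).exists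
  obtain ⟨b, hb⟩ := (htop.eventually_const_lt hclt).exists
  obtain ⟨t, ht⟩ := mem_range_of_exists_le_of_exists_ge hcont ⟨a, ha.le⟩ ⟨b, hb.le⟩
  exact ⟨A ∩ f ⁻¹' Iic t, inter_subset_left, hA.inter (hf.measurable measurableSet_Iic),
    (hB t).trans ht⟩

lemma lintegral_ball_comp_add_smul {N : ℕ} {F : Euc N → ℝ≥0∞} (hF : Measurable F) (x e : Euc N)
    (ρ : ℝ) {t : ℝ} (ht : 0 < t) :
    ∫⁻ y in Metric.ball e ρ, F (x + t • y) =
      ENNReal.ofReal (t ^ N)⁻¹ * ∫⁻ z in Metric.ball (x + t • e) (t * ρ), F z := by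
  set H : Euc N → ℝ≥0∞ := (Metric.ball (x + t • e) (t * ρ)).indicator F
  have hH : Measurable H := hF.indicator measurableSet_ball
  have h1 : ∀ y, (Metric.ball e ρ).indicator (fun y => F (x + t • y)) y = H (x + t • y) := by
    intro y
    have : y ∈ Metric.ball e ρ ↔ x + t • y ∈ Metric.ball (x + t • e) (t * ρ) := by
      rw [Metric.mem_ball, Metric.mem_ball, dist_add_left, dist_smul₀,
        Real.norm_of_nonneg ht.le, mul_lt_mul_iff_right₀ ht]
    by_cases hy : y ∈ Metric.ball e ρ
    · rw [indicator_of_mem hy]; exact (indicator_of_mem (this.1 hy) F).symm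
    · rw [indicator_of_notMem hy]
      exact (indicator_of_notMem (fun h => hy (this.2 h)) F).symm
  rw [← lintegral_indicator measurableSet_ball, ← lintegral_indicator measurableSet_ball]
  simp_rw [h1]
  have h2 : ∫⁻ y, H (x + t • y) = ∫⁻ w, H (x + w) ∂(Measure.map (fun y : Euc N => t • y) volume) := by
    exact (lintegral_map (f := fun w => H (x + w)) (hH.comp (measurable_const_add x))
      (measurable_const_smul t)).symm
  rw [h2, Measure.map_addHaar_smul _ ht.ne', lintegral_smul_measure,
    lintegral_add_left_eq_self H x, finrank_euclideanSpace, Fintype.card_fin,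
    abs_of_pos (by positivity), smul_eq_mul]

lemma lintegral_lintegral_ball_le {N : ℕ} (ν : Measure (Euc N)) [SFinite ν] {C : ℝ≥0∞}
    (hν : ∀ (z : Euc N) (s : ℝ), 0 < s → ν (Metric.ball z s) ≤ C * ENNReal.ofReal (s ^ (N - 1)))
    {F : Euc N → ℝ≥0∞} (hF : Measurable F) (v : Euc N) {s : ℝ} (hs : 0 < s) :
    ∫⁻ x, (∫⁻ z in Metric.ball (x + v) s, F z) ∂ν ≤
      C * ENNReal.ofReal (s ^ (N - 1)) * ∫⁻ z, F z := by
  have hmeas : Measurable (Function.uncurry fun (x z : Euc N) =>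
      (Metric.ball (x + v) s).indicator F z) := by
    have : (Function.uncurry fun (x z : Euc N) => (Metric.ball (x + v) s).indicator F z) =
        {w : Euc N × Euc N | dist w.2 (w.1 + v) < s}.indicator (fun w => F w.2) := by
      ext w
      simp only [Function.uncurry, indicator, Metric.mem_ball, mem_ofPred_eq]
    rw [this]
    refine (hF.comp measurable_snd).indicator (IsOpen.measurableSet ?_)
    exact isOpen_lt (by fun_prop) continuous_const
  calc ∫⁻ x, (∫⁻ z in Metric.ball (x + v) s, F z) ∂ν
      = ∫⁻ x, (∫⁻ z, (Metric.ball (x + v) s).indicator F z) ∂ν := by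
        simp_rw [lintegral_indicator measurableSet_ball]
    _ = ∫⁻ z, (∫⁻ x, (Metric.ball (x + v) s).indicator F z ∂ν) :=
        lintegral_lintegral_swap hmeas.aemeasurable
    _ ≤ ∫⁻ z, C * ENNReal.ofReal (s ^ (N - 1)) * F z := by
        refine lintegral_mono fun z => ?_
        have : ∀ x, (Metric.ball (x + v) s).indicator F z =
            (Metric.ball (z - v) s).indicator (fun _ => F z) x := by
          intro x
          have : z ∈ Metric.ball (x + v) s ↔ x ∈ Metric.ball (z - v) s := by
            rw [Metric.mem_ball, Metric.mem_ball, dist_eq_norm, dist_eq_norm, ← norm_neg]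
            congr! 2
            abel
          by_cases hy : z ∈ Metric.ball (x + v) s
          · rw [indicator_of_mem hy, indicator_of_mem (this.1 hy)]
          · rw [indicator_of_notMem hy, indicator_of_notMem (fun h => hy (this.2 h))]
        simp_rw [this]
        rw [lintegral_indicator measurableSet_ball, setLIntegral_const, mul_comm]
        gcongr
        exact hν _ _ hs
    _ = C * ENNReal.ofReal (s ^ (N - 1)) * ∫⁻ z, F z := lintegral_const_mul _ hF

/-- Averages over the balls `x + t • ball e ρ` map `L^p(ℝ^N)` to `L^r(ν)` if `ν` is upper
`(N-1)`-regular. -/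
lemma lintegral_ballAverage_rpow_le {N : ℕ} (hN : 1 ≤ N) (ν : Measure (Euc N)) [SFinite ν]
    {C : ℝ≥0∞}
    (hν : ∀ (z : Euc N) (s : ℝ), 0 < s → ν (Metric.ball z s) ≤ C * ENNReal.ofReal (s ^ (N - 1)))
    {p r : ℝ} (hp : 1 < p) (hpr : p ≤ r) {e : Euc N} {ρ : ℝ} (hρ : 0 < ρ) (hρ1 : ρ ≤ 1)
    {G : Euc N → ℝ≥0∞} (hG : Measurable G) {t : ℝ} (ht : 0 < t) :
    ∫⁻ x, (∫⁻ y in Metric.ball e ρ, G (x + t • y)) ^ r ∂ν ≤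
      (volume (Metric.ball e ρ)) ^ ((1 - 1 / p) * r) * C *
        ENNReal.ofReal (t ^ (-((N : ℝ) * (r / p - 1) + 1))) * (∫⁻ z, G z ^ p) ^ (r / p) := by
  set J := ∫⁻ z, G z ^ p
  set V := (volume (Metric.ball e ρ)) ^ (1 - 1 / p) with hV
  have hp0 : 0 < p := by linarith
  have hr0 : 0 < r := by linarith
  have ha : 0 ≤ r / p - 1 := by rw [sub_nonneg, one_le_div hp0]; exact hpr
  set Iₜ : Euc N → ℝ≥0∞ := fun x => ∫⁻ y in Metric.ball e ρ, G (x + t • y) ^ p with hI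
  have hGp : Measurable fun z => G z ^ p := hG.pow_const p
  have hIeq : ∀ x, Iₜ x = ENNReal.ofReal (t ^ N)⁻¹ *
      ∫⁻ z in Metric.ball (x + t • e) (t * ρ), G z ^ p :=
    fun x => lintegral_ball_comp_add_smul hGp x e ρ ht
  have hIle : ∀ x, Iₜ x ≤ ENNReal.ofReal (t ^ N)⁻¹ * J := fun x => by
    rw [hIeq]; gcongr; exact setLIntegral_le_lintegral _ _
  have hM : ∀ x, ∫⁻ y in Metric.ball e ρ, G (x + t • y) ≤ (Iₜ x) ^ (1 / p) * V := by
    intro x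
    have hm : AEMeasurable (fun y => G (x + t • y)) (volume.restrict (Metric.ball e ρ)) :=
      (hG.comp ((measurable_const_add x).comp (measurable_const_smul t))).aemeasurable
    have hconj := Real.HolderConjugate.conjExponent hp
    have := ENNReal.lintegral_mul_le_Lp_mul_Lq (volume.restrict (Metric.ball e ρ)) hconj hm
      (aemeasurable_const (b := (1 : ℝ≥0∞)))
    simp only [Pi.mul_apply, mul_one, ENNReal.one_rpow, lintegral_const, Measure.restrict_apply,
      MeasurableSet.univ, univ_inter, one_mul] at this
    refine this.trans_eq ?_
    rw [hI, hV]
    congr 2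
    have := hconj.inv_add_inv_eq_one
    rw [one_div, one_div]; linarith
  have hMr : ∀ x, (∫⁻ y in Metric.ball e ρ, G (x + t • y)) ^ r ≤
      (V ^ r * (ENNReal.ofReal (t ^ N)⁻¹ * J) ^ (r / p - 1)) * Iₜ x := by
    intro x
    calc (∫⁻ y in Metric.ball e ρ, G (x + t • y)) ^ r ≤ ((Iₜ x) ^ (1 / p) * V) ^ r := by
          gcongr; exact hM x
      _ = V ^ r * ((Iₜ x) ^ (r / p - 1) * Iₜ x) := by
          rw [ENNReal.mul_rpow_of_nonneg _ _ hr0.le, ← ENNReal.rpow_mul, mul_comm]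
          congr 1
          nth_rewrite 3 [← ENNReal.rpow_one (Iₜ x)]
          rw [← ENNReal.rpow_add_of_nonneg _ _ ha zero_le_one]
          congr 1; ring
      _ ≤ V ^ r * ((ENNReal.ofReal (t ^ N)⁻¹ * J) ^ (r / p - 1) * Iₜ x) := by
          gcongr; exact hIle x
      _ = _ := by ring
  have hIint : ∫⁻ x, Iₜ x ∂ν ≤ C * ENNReal.ofReal (t⁻¹) * J := by
    simp_rw [hIeq]
    rw [lintegral_const_mul' _ _ ENNReal.ofReal_ne_top]
    refine (mul_le_mul_right (lintegral_lintegral_ball_le ν hν hGp (t • e) (mul_pos ht hρ))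
      _).trans ?_
    rw [← mul_assoc, mul_left_comm, ← ENNReal.ofReal_mul (by positivity)]
    gcongr
    obtain ⟨n, rfl⟩ : ∃ n, N = n + 1 := ⟨N - 1, by omega⟩
    rw [Nat.add_sub_cancel, mul_pow, pow_succ, mul_inv]
    calc (t ^ n)⁻¹ * t⁻¹ * (t ^ n * ρ ^ n) = t⁻¹ * ρ ^ n := by field_simp
      _ ≤ t⁻¹ * 1 := by gcongr; exact pow_le_one₀ hρ.le hρ1
      _ = t⁻¹ := mul_one _
  calc ∫⁻ x, (∫⁻ y in Metric.ball e ρ, G (x + t • y)) ^ r ∂ν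
      ≤ ∫⁻ x, (V ^ r * (ENNReal.ofReal (t ^ N)⁻¹ * J) ^ (r / p - 1)) * Iₜ x ∂ν :=
        lintegral_mono hMr
    _ = (V ^ r * (ENNReal.ofReal (t ^ N)⁻¹ * J) ^ (r / p - 1)) * ∫⁻ x, Iₜ x ∂ν := by
        refine lintegral_const_mul _ ?_
        exact Measurable.lintegral_prod_right' (f := fun w : Euc N × Euc N => G (w.1 + t • w.2) ^ p)
          (hGp.comp (by fun_prop))
    _ ≤ (V ^ r * (ENNReal.ofReal (t ^ N)⁻¹ * J) ^ (r / p - 1)) *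
        (C * ENNReal.ofReal (t⁻¹) * J) := by gcongr
    _ = V ^ r * C * (ENNReal.ofReal (t ^ N)⁻¹ ^ (r / p - 1) * ENNReal.ofReal (t⁻¹)) *
        (J ^ (r / p - 1) * J) := by
        rw [ENNReal.mul_rpow_of_nonneg _ _ ha]; ring
    _ = _ := by
        congr 1
        · congr 1
          · rw [hV, ← ENNReal.rpow_mul]
          · rw [ENNReal.ofReal_rpow_of_nonneg (by positivity) ha,
              ← ENNReal.ofReal_mul (by positivity)]
            congr 1
            rw [← Real.rpow_natCast, ← Real.rpow_neg ht.le, ← Real.rpow_mul ht.le,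
              ← Real.rpow_neg_one t, ← Real.rpow_add ht]
            congr 1; ring
        · nth_rewrite 2 [← ENNReal.rpow_one J]
          rw [← ENNReal.rpow_add_of_nonneg _ _ ha zero_le_one]
          congr 1; ring

lemma lintegral_Ioc_ofReal_rpow {s ε : ℝ} (hs : -1 < s) (hε : 0 < ε) :
    ∫⁻ t in Ioc 0 ε, ENNReal.ofReal (t ^ s) = ENNReal.ofReal (ε ^ (s + 1) / (s + 1)) := by
  have h1 : IntegrableOn (fun t : ℝ => t ^ s) (Ioc 0 ε) volume := by
    rw [← intervalIntegrable_iff_integrableOn_Ioc_of_le hε.le]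
    exact intervalIntegral.intervalIntegrable_rpow' hs
  rw [← ofReal_integral_eq_lintegral_ofReal h1, ← intervalIntegral.integral_of_le hε.le,
    integral_rpow (Or.inl hs), Real.zero_rpow (by linarith), sub_zero]
  exact (ae_restrict_mem measurableSet_Ioc).mono fun t ht => Real.rpow_nonneg ht.1.le s

/-- A fractional-integral type estimate with an arbitrarily small factor for small `ε`. -/
lemma exists_lintegral_coneIntegral_rpow_le {N : ℕ} (hN : 1 ≤ N) (ν : Measure (Euc N)) [SFinite ν]
    {C : ℝ≥0∞} (hC : C ≠ ⊤)
    (hν : ∀ (z : Euc N) (s : ℝ), 0 < s → ν (Metric.ball z s) ≤ C * ENNReal.ofReal (s ^ (N - 1)))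
    {p r : ℝ} (hp : 1 < p) (hpr : p ≤ r) (hsub : (N : ℝ) / p - ((N : ℝ) - 1) / r < 1)
    {e : Euc N} {ρ : ℝ} (hρ : 0 < ρ) (hρ1 : ρ ≤ 1) :
    ∃ (K : ℝ≥0∞) (κ : ℝ), K ≠ ⊤ ∧ 0 < κ ∧ ∀ ε : ℝ, 0 < ε → ε ≤ 1 →
      ∀ G : Euc N → ℝ≥0∞, Measurable G →
      ∫⁻ x, (∫⁻ t in Ioc 0 ε, ∫⁻ y in Metric.ball e ρ, G (x + t • y)) ^ r ∂ν ≤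
        K * ENNReal.ofReal (ε ^ κ) * (∫⁻ z, G z ^ p) ^ (r / p) := by
  have hp0 : 0 < p := by linarith
  have hr1 : 1 < r := by linarith
  have hr0 : 0 < r := by linarith
  obtain ⟨β, hβ1, hβ2⟩ : ∃ β : ℝ, (N : ℝ) * (1 / p - 1 / r) < β ∧ β < 1 - 1 / r := by
    apply exists_between
    have : (N : ℝ) / p - ((N : ℝ) - 1) / r = (N : ℝ) * (1 / p - 1 / r) + 1 / r := by
      field_simp; ring
    linarith
  set r' := r.conjExponent
  have hconj : r.HolderConjugate r' := Real.HolderConjugate.conjExponent hr1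
  have hr' : 0 < r' := hconj.symm.pos
  have hs1 : -1 < -β * r' := by
    have h1 : r'⁻¹ = 1 - r⁻¹ := by linarith [hconj.inv_add_inv_eq_one]
    have h2 : β * r' < r'⁻¹ * r' := by
      rw [h1, ← one_div]; exact mul_lt_mul_of_pos_right hβ2 hr'
    rw [inv_mul_cancel₀ hr'.ne'] at h2
    linarith
  set s2 := β * r - ((N : ℝ) * (r / p - 1) + 1) with hs2def
  have hs2 : -1 < s2 := by
    have : (N : ℝ) * (1 / p - 1 / r) * r < β * r := mul_lt_mul_of_pos_right hβ1 hr0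
    have h3 : (N : ℝ) * (1 / p - 1 / r) * r = (N : ℝ) * (r / p - 1) := by
      field_simp
    rw [hs2def]; linarith
  set W := (volume (Metric.ball e ρ)) ^ ((1 - 1 / p) * r) * C with hW
  set Q := ENNReal.ofReal (1 / (-β * r' + 1)) ^ (r / r') with hQ
  refine ⟨Q * W * ENNReal.ofReal (1 / (s2 + 1)), s2 + 1, ?_, by linarith, ?_⟩
  · refine ENNReal.mul_ne_top (ENNReal.mul_ne_top ?_ (ENNReal.mul_ne_top ?_ hC)) ENNReal.ofReal_ne_top
    · exact ENNReal.rpow_ne_top_of_nonneg (by positivity) ENNReal.ofReal_ne_top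
    · refine ENNReal.rpow_ne_top_of_nonneg (mul_nonneg ?_ hr0.le) measure_ball_lt_top.ne
      rw [sub_nonneg, div_le_one hp0]; exact hp.le
  intro ε hε hε1 G hG
  set M : Euc N → ℝ → ℝ≥0∞ := fun x t => ∫⁻ y in Metric.ball e ρ, G (x + t • y) with hM
  have hMmeas : Measurable (Function.uncurry M) :=
    Measurable.lintegral_prod_right'
      (f := fun w : (Euc N × ℝ) × Euc N => G (w.1.1 + w.1.2 • w.2)) (hG.comp (by fun_prop))
  have hMx : ∀ x, Measurable (M x) := fun x => hMmeas.comp measurable_prodMk_left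
  have hD : ∀ x, (∫⁻ t in Ioc 0 ε, M x t) ^ r ≤
      Q * ∫⁻ t in Ioc 0 ε, ENNReal.ofReal (t ^ (β * r)) * M x t ^ r := by
    intro x
    have hholder := ENNReal.lintegral_mul_le_Lp_mul_Lq (volume.restrict (Ioc 0 ε)) hconj.symm
      (f := fun t => ENNReal.ofReal (t ^ (-β))) (g := fun t => ENNReal.ofReal (t ^ β) * M x t)
      (by fun_prop) (((measurable_id.pow_const β).ennreal_ofReal).mul (hMx x)).aemeasurable
    have hl : ∫⁻ t in Ioc 0 ε, ((fun t => ENNReal.ofReal (t ^ (-β))) *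
        (fun t => ENNReal.ofReal (t ^ β) * M x t)) t = ∫⁻ t in Ioc 0 ε, M x t := by
      refine setLIntegral_congr_fun measurableSet_Ioc fun t ht => ?_
      simp only [Pi.mul_apply]
      rw [← mul_assoc, ← ENNReal.ofReal_mul (Real.rpow_nonneg ht.1.le _), ← Real.rpow_add ht.1]
      simp
    have hq1 : ∫⁻ t in Ioc 0 ε, ENNReal.ofReal (t ^ (-β)) ^ r' ≤
        ENNReal.ofReal (1 / (-β * r' + 1)) := by
      have : ∫⁻ t in Ioc 0 ε, ENNReal.ofReal (t ^ (-β)) ^ r' =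
          ∫⁻ t in Ioc 0 ε, ENNReal.ofReal (t ^ (-β * r')) := by
        refine setLIntegral_congr_fun measurableSet_Ioc fun t ht => ?_
        rw [ENNReal.ofReal_rpow_of_nonneg (Real.rpow_nonneg ht.1.le _) hr'.le,
          ← Real.rpow_mul ht.1.le]
      rw [this, lintegral_Ioc_ofReal_rpow hs1 hε]
      gcongr
      · linarith
      · exact Real.rpow_le_one hε.le hε1 (by linarith)
    have hq2 : ∫⁻ t in Ioc 0 ε, (ENNReal.ofReal (t ^ β) * M x t) ^ r =
        ∫⁻ t in Ioc 0 ε, ENNReal.ofReal (t ^ (β * r)) * M x t ^ r := by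
      refine setLIntegral_congr_fun measurableSet_Ioc fun t ht => ?_
      rw [ENNReal.mul_rpow_of_nonneg _ _ hr0.le,
        ENNReal.ofReal_rpow_of_nonneg (Real.rpow_nonneg ht.1.le _) hr0.le,
        ← Real.rpow_mul ht.1.le]
    rw [hl, hq2] at hholder
    calc (∫⁻ t in Ioc 0 ε, M x t) ^ r ≤ ((∫⁻ t in Ioc 0 ε, ENNReal.ofReal (t ^ (-β)) ^ r') ^ (1 / r') *
          (∫⁻ t in Ioc 0 ε, ENNReal.ofReal (t ^ (β * r)) * M x t ^ r) ^ (1 / r)) ^ r := by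
          gcongr
      _ ≤ (ENNReal.ofReal (1 / (-β * r' + 1)) ^ (1 / r') *
          (∫⁻ t in Ioc 0 ε, ENNReal.ofReal (t ^ (β * r)) * M x t ^ r) ^ (1 / r)) ^ r := by
          gcongr
      _ = _ := by
          rw [ENNReal.mul_rpow_of_nonneg _ _ hr0.le, ← ENNReal.rpow_mul, ← ENNReal.rpow_mul,
            one_div_mul_cancel hr0.ne', ENNReal.rpow_one, hQ]
          congr 2; ring
  have hmeas2 : Measurable (Function.uncurry fun (x : Euc N) (t : ℝ) =>
      ENNReal.ofReal (t ^ (β * r)) * M x t ^ r) :=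
    ((measurable_snd.pow_const (β * r)).ennreal_ofReal).mul (hMmeas.pow_const r)
  calc ∫⁻ x, (∫⁻ t in Ioc 0 ε, M x t) ^ r ∂ν
      ≤ ∫⁻ x, Q * (∫⁻ t in Ioc 0 ε, ENNReal.ofReal (t ^ (β * r)) * M x t ^ r) ∂ν :=
        lintegral_mono hD
    _ = Q * ∫⁻ x, (∫⁻ t in Ioc 0 ε, ENNReal.ofReal (t ^ (β * r)) * M x t ^ r) ∂ν :=
        lintegral_const_mul _ hmeas2.lintegral_prod_right'
    _ = Q * ∫⁻ t in Ioc 0 ε, (∫⁻ x, ENNReal.ofReal (t ^ (β * r)) * M x t ^ r ∂ν) := by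
        rw [lintegral_lintegral_swap hmeas2.aemeasurable]
    _ ≤ Q * ∫⁻ t in Ioc 0 ε, ENNReal.ofReal (t ^ s2) * (W * (∫⁻ z, G z ^ p) ^ (r / p)) := by
        gcongr 1
        refine setLIntegral_mono' measurableSet_Ioc fun t ht => ?_
        rw [lintegral_const_mul' _ _ ENNReal.ofReal_ne_top]
        refine (mul_le_mul_right
          (lintegral_ballAverage_rpow_le hN ν hν hp hpr hρ hρ1 hG ht.1) _).trans_eq ?_
        have : ENNReal.ofReal (t ^ s2) = ENNReal.ofReal (t ^ (β * r)) *
            ENNReal.ofReal (t ^ (-((N : ℝ) * (r / p - 1) + 1))) := by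
          rw [← ENNReal.ofReal_mul (Real.rpow_nonneg ht.1.le _), ← Real.rpow_add ht.1, hs2def]
          rfl
        rw [this, hW]; ring
    _ = Q * (ENNReal.ofReal (ε ^ (s2 + 1) / (s2 + 1)) * (W * (∫⁻ z, G z ^ p) ^ (r / p))) := by
        rw [lintegral_mul_const _ (by fun_prop), lintegral_Ioc_ofReal_rpow hs2 hε]
    _ = _ := by
        rw [div_eq_mul_one_div, ENNReal.ofReal_mul (by positivity)]; ring

/-- The tent function of radius `ρ` centred at `e`. -/
def tent {N : ℕ} (e : Euc N) (ρ : ℝ) (y : Euc N) : ℝ := max 0 (ρ - dist y e)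

section tent

variable {N : ℕ} {e : Euc N} {ρ : ℝ}

lemma tent_nonneg (y : Euc N) : 0 ≤ tent e ρ y := le_max_left _ _

lemma tent_le (hρ : 0 ≤ ρ) (y : Euc N) : tent e ρ y ≤ ρ :=
  max_le hρ (by linarith [dist_nonneg (x := y) (y := e)])

lemma tent_eq_zero {y : Euc N} (hy : y ∉ Metric.ball e ρ) : tent e ρ y = 0 := by
  rw [Metric.mem_ball, not_lt] at hy
  exact max_eq_left (by linarith)

lemma continuous_tent : Continuous (tent e ρ) := by
  unfold tent; fun_prop

lemma abs_tent_sub_le (y z : Euc N) : |tent e ρ y - tent e ρ z| ≤ dist y z := by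
  unfold tent
  refine (abs_max_sub_max_le_max _ _ _ _).trans ?_
  rw [sub_self, abs_zero, max_eq_right (abs_nonneg _)]
  have : ρ - dist y e - (ρ - dist z e) = dist z e - dist y e := by ring
  rw [this, dist_comm y z]
  exact abs_dist_sub_le z y e

lemma hasCompactSupport_tent : HasCompactSupport (tent e ρ) :=
  HasCompactSupport.intro (isCompact_closedBall e ρ)
    fun _ hy => tent_eq_zero fun h => hy (Metric.ball_subset_closedBall h)

lemma integral_tent_pos (hρ : 0 < ρ) : 0 < ∫ y, tent e ρ y := by
  refine continuous_tent.integral_pos_of_hasCompactSupport_nonneg_nonzero hasCompactSupport_tent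
    tent_nonneg (x := e) ?_
  simp [tent, hρ.ne', hρ.le]

end tent

/-- The mean of `φ` over `x + ε • ball e ρ`, weighted by a tent function; only the values of `φ` in
`Ω` are used. -/
def coneMean {N : ℕ} (Ω : Set (Euc N)) (e : Euc N) (ρ ε : ℝ) (φ : Euc N → ℝ) (x : Euc N) : ℝ :=
  (∫ y, tent e ρ y)⁻¹ * (ε ^ N)⁻¹ * ∫ z in Ω, tent e ρ (ε⁻¹ • (z - x)) * φ z

section coneMean

variable {N : ℕ} {Ω : Set (Euc N)} {e : Euc N} {ρ ε : ℝ}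

lemma coneMean_eq (hε : 0 < ε) (φ : Euc N → ℝ) {x : Euc N}
    (hx : ∀ y ∈ Metric.ball e ρ, x + ε • y ∈ Ω) :
    coneMean Ω e ρ ε φ x = (∫ y, tent e ρ y)⁻¹ * ∫ y, tent e ρ y * φ (x + ε • y) := by
  unfold coneMean
  rw [setIntegral_eq_integral_of_forall_compl_eq_zero, mul_assoc]
  · congr 1
    rw [← integral_add_left_eq_self _ x]
    simp only [add_sub_cancel_left]
    have := Measure.integral_comp_smul (volume : Measure (Euc N))
      (fun w => tent e ρ (ε⁻¹ • w) * φ (x + w)) ε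
    simp only [smul_smul, inv_mul_cancel₀ hε.ne', one_smul] at this
    rw [this, finrank_euclideanSpace, Fintype.card_fin, abs_of_pos (by positivity), smul_eq_mul]
  · intro z hz
    rw [tent_eq_zero, zero_mul]
    intro hmem
    apply hz
    have := hx _ hmem
    rwa [smul_smul, mul_inv_cancel₀ hε.ne', one_smul, add_sub_cancel] at this

lemma integrable_tent_mul {φ : Euc N → ℝ} (hρ : 0 ≤ ρ) (hφ : IntegrableOn φ Ω) (x : Euc N) :
    IntegrableOn (fun z => tent e ρ (ε⁻¹ • (z - x)) * φ z) Ω := by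
  refine Integrable.bdd_mul hφ (c := ρ) ?_ (ae_of_all _ fun z => ?_)
  · exact (continuous_tent.comp (by fun_prop)).aestronglyMeasurable
  · rw [Real.norm_of_nonneg (tent_nonneg _)]; exact tent_le hρ _

lemma abs_coneMean_le (hρ : 0 < ρ) (hρ1 : ρ ≤ 1) (hε : 0 < ε) {φ : Euc N → ℝ}
    (hφ : IntegrableOn φ Ω) (x : Euc N) :
    |coneMean Ω e ρ ε φ x| ≤ (∫ y, tent e ρ y)⁻¹ * (ε ^ N)⁻¹ * ∫ z in Ω, |φ z| := by
  unfold coneMean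
  have hc := integral_tent_pos (e := e) hρ
  rw [abs_mul, abs_of_pos (by positivity)]
  gcongr
  refine (abs_integral_le_integral_abs).trans ?_
  refine integral_mono (integrable_tent_mul hρ.le hφ x).abs hφ.abs fun z => ?_
  simp only
  rw [abs_mul, abs_of_nonneg (tent_nonneg _)]
  exact mul_le_of_le_one_left (abs_nonneg _) ((tent_le hρ.le _).trans hρ1)

lemma abs_coneMean_sub_le (hρ : 0 < ρ) (hε : 0 < ε) {φ : Euc N → ℝ}
    (hφ : IntegrableOn φ Ω) (x x' : Euc N) :
    |coneMean Ω e ρ ε φ x - coneMean Ω e ρ ε φ x'| ≤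
      ((∫ y, tent e ρ y)⁻¹ * (ε ^ N)⁻¹ * ε⁻¹ * ∫ z in Ω, |φ z|) * dist x x' := by
  unfold coneMean
  have hc := integral_tent_pos (e := e) hρ
  rw [← mul_sub, ← integral_sub (integrable_tent_mul hρ.le hφ x) (integrable_tent_mul hρ.le hφ x'),
    abs_mul, abs_of_pos (by positivity), mul_assoc _ ε⁻¹, mul_assoc (_ * _)]
  gcongr
  refine (abs_integral_le_integral_abs).trans ?_
  have : ε⁻¹ * (∫ z in Ω, |φ z|) * dist x x' = ∫ z in Ω, (ε⁻¹ * dist x x') * |φ z| := by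
    rw [integral_const_mul]; ring
  rw [this]
  refine integral_mono
    ((integrable_tent_mul hρ.le hφ x).sub (integrable_tent_mul hρ.le hφ x')).abs
    (hφ.abs.const_mul _) fun z => ?_
  simp only
  rw [← sub_mul, abs_mul]
  gcongr
  refine (abs_tent_sub_le _ _).trans_eq ?_
  rw [dist_smul₀, norm_inv, Real.norm_of_nonneg hε.le, dist_sub_left]

lemma continuous_coneMean (hρ : 0 < ρ) (hε : 0 < ε) {φ : Euc N → ℝ}
    (hφ : IntegrableOn φ Ω) : Continuous (coneMean Ω e ρ ε φ) := by
  have hc := integral_tent_pos (e := e) hρ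
  refine (LipschitzWith.of_dist_le_mul (K := ⟨_, ?_⟩) fun x y =>
    abs_coneMean_sub_le (e := e) hρ hε hφ x y).continuous
  have : 0 ≤ ∫ z in Ω, |φ z| := integral_nonneg fun _ => abs_nonneg _
  positivity

lemma norm_gradient (φ : Euc N → ℝ) (x : Euc N) : ‖gradient φ x‖ = ‖fderiv ℝ φ x‖ := by
  rw [gradient, LinearIsometryEquiv.norm_map]

lemma continuous_gradient {φ : Euc N → ℝ} (hφ : ContDiff ℝ ∞ φ) : Continuous (gradient φ) :=
  (InnerProductSpace.toDual ℝ (Euc N)).symm.continuous.comp (hφ.continuous_fderiv (by simp))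

lemma enorm_sub_le_lintegral_gradient {φ : Euc N → ℝ} (hφ : ContDiff ℝ ∞ φ) (hε : 0 < ε)
    (x y : Euc N) (hy : ‖y‖ ≤ 2) :
    ‖φ (x + ε • y) - φ x‖ₑ ≤ ENNReal.ofReal 2 * ∫⁻ t in Ioc 0 ε, ‖gradient φ (x + t • y)‖ₑ := by
  have hd : ∀ t : ℝ, HasDerivAt (fun s : ℝ => φ (x + s • y)) (fderiv ℝ φ (x + t • y) y) t := by
    intro t
    have h1 : HasDerivAt (fun s : ℝ => x + s • y) y t := by
      simpa using ((hasDerivAt_id t).smul_const y).const_add x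
    exact ((hφ.differentiable (by simp)) (x + t • y)).hasFDerivAt.comp_hasDerivAt t h1
  have hcont : Continuous fun t : ℝ => fderiv ℝ φ (x + t • y) y :=
    ((hφ.continuous_fderiv (by simp)).comp (by fun_prop)).clm_apply continuous_const
  have hftc := intervalIntegral.integral_eq_sub_of_hasDerivAt (a := 0) (b := ε)
    (fun t _ => hd t) (hcont.intervalIntegrable _ _)
  simp only [zero_smul, add_zero] at hftc
  rw [← hftc, intervalIntegral.integral_of_le hε.le]
  refine (enorm_integral_le_lintegral_enorm _).trans ?_
  rw [← lintegral_const_mul' _ _ ENNReal.ofReal_ne_top]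
  refine lintegral_mono fun t => ?_
  rw [← ofReal_norm, ← ofReal_norm, ← ENNReal.ofReal_mul (by norm_num)]
  refine ENNReal.ofReal_le_ofReal ?_
  rw [norm_gradient, mul_comm]
  exact ((fderiv ℝ φ (x + t • y)).le_opNorm y).trans (by gcongr)

/-- A smooth function differs from its cone mean by a fractional integral of its gradient. -/
lemma enorm_sub_coneMean_le (he : ‖e‖ = 1) (hρ : 0 < ρ) (hρ1 : ρ ≤ 1) (hε : 0 < ε)
    {φ : Euc N → ℝ} (hφ : ContDiff ℝ ∞ φ) {x : Euc N}
    (hx : ∀ y ∈ Metric.ball e ρ, ∀ t, 0 < t → t ≤ ε → x + t • y ∈ Ω) :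
    ‖φ x - coneMean Ω e ρ ε φ x‖ₑ ≤ ENNReal.ofReal ((∫ y, tent e ρ y)⁻¹ * 2) *
      ∫⁻ t in Ioc 0 ε, ∫⁻ y in Metric.ball e ρ,
        Ω.indicator (fun z => ‖gradient φ z‖ₑ) (x + t • y) := by
  have hc := integral_tent_pos (e := e) hρ
  set c := ∫ y, tent e ρ y with hcdef
  have hint1 : Integrable (fun y => tent e ρ y * φ x) :=
    (continuous_tent.integrable_of_hasCompactSupport hasCompactSupport_tent).mul_const _
  have hint2 : Integrable (fun y => tent e ρ y * φ (x + ε • y)) := by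
    refine Continuous.integrable_of_hasCompactSupport
      (continuous_tent.mul (hφ.continuous.comp (by fun_prop))) ?_
    exact hasCompactSupport_tent.mul_right
  have heq : φ x - coneMean Ω e ρ ε φ x =
      c⁻¹ * ∫ y, tent e ρ y * (φ x - φ (x + ε • y)) := by
    rw [coneMean_eq hε φ fun y hy => hx y hy ε hε le_rfl]
    simp_rw [mul_sub]
    rw [integral_sub hint1 hint2, mul_sub, integral_mul_const, ← hcdef, ← mul_assoc,
      inv_mul_cancel₀ hc.ne', one_mul]
  have hnorm : ∀ y ∈ Metric.ball e ρ, ‖y‖ ≤ 2 := by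
    intro y hy
    rw [Metric.mem_ball, dist_eq_norm] at hy
    calc ‖y‖ = ‖e + (y - e)‖ := by congr 1; abel
      _ ≤ ‖e‖ + ‖y - e‖ := norm_add_le _ _
      _ ≤ 2 := by linarith
  have hgm : Measurable fun z => ‖gradient φ z‖ₑ := (continuous_gradient hφ).measurable.enorm
  rw [heq, enorm_mul, ← ofReal_norm, Real.norm_of_nonneg (inv_nonneg.2 hc.le),
    ENNReal.ofReal_mul (inv_nonneg.2 hc.le), mul_assoc]
  gcongr 1
  calc ‖∫ y, tent e ρ y * (φ x - φ (x + ε • y))‖ₑ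
      ≤ ∫⁻ y, ‖tent e ρ y * (φ x - φ (x + ε • y))‖ₑ := enorm_integral_le_lintegral_enorm _
    _ ≤ ∫⁻ y, (Metric.ball e ρ).indicator (fun y => ‖φ (x + ε • y) - φ x‖ₑ) y := by
        refine lintegral_mono fun y => ?_
        by_cases hy : y ∈ Metric.ball e ρ
        · rw [indicator_of_mem hy, enorm_mul, ← enorm_neg (φ x - _), neg_sub]
          refine mul_le_of_le_one_left (by simp) ?_
          rw [← ofReal_norm, Real.norm_of_nonneg (tent_nonneg _)]
          exact ENNReal.ofReal_le_one.2 ((tent_le hρ.le _).trans hρ1)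
        · rw [indicator_of_notMem hy, tent_eq_zero hy]; simp
    _ = ∫⁻ y in Metric.ball e ρ, ‖φ (x + ε • y) - φ x‖ₑ := lintegral_indicator measurableSet_ball _
    _ ≤ ∫⁻ y in Metric.ball e ρ, ENNReal.ofReal 2 *
          ∫⁻ t in Ioc 0 ε, ‖gradient φ (x + t • y)‖ₑ :=
        setLIntegral_mono' measurableSet_ball fun y hy =>
          enorm_sub_le_lintegral_gradient hφ hε x y (hnorm y hy)
    _ = ENNReal.ofReal 2 * ∫⁻ y in Metric.ball e ρ, ∫⁻ t in Ioc 0 ε,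
          ‖gradient φ (x + t • y)‖ₑ := lintegral_const_mul' _ _ ENNReal.ofReal_ne_top
    _ = ENNReal.ofReal 2 * ∫⁻ t in Ioc 0 ε, ∫⁻ y in Metric.ball e ρ,
          ‖gradient φ (x + t • y)‖ₑ := by
        rw [lintegral_lintegral_swap]
        exact (hgm.comp (g := fun z => ‖gradient φ z‖ₑ)
          (f := fun w : Euc N × ℝ => x + w.2 • w.1) (by fun_prop)).aemeasurable
    _ = _ := by
        congr 1
        refine setLIntegral_congr_fun measurableSet_Ioc fun t ht => ?_
        refine setLIntegral_congr_fun measurableSet_ball fun y hy => ?_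
        rw [indicator_of_mem (hx y hy t ht.1 ht.2)]

end coneMean

/-- Near each boundary point, a smooth function is approximated by its cone means in `L^r(∂Ω)`, with
an error controlled by the `L^p(Ω)` norm of its gradient. -/
lemma exists_patch_coneMean {N : ℕ} (hN : 2 ≤ N) {Ω : Set (Euc N)} (hΩ : IsOpen Ω)
    (hs : HasSmoothBoundary Ω) {p r : ℝ} (hp : 1 < p) (hpr : p ≤ r)
    (hsub : (N : ℝ) / p - ((N : ℝ) - 1) / r < 1) {x₀ : Euc N} (hx₀ : x₀ ∈ frontier Ω) :
    ∃ (s : ℝ) (e : Euc N) (ρ R κ : ℝ) (K : ℝ≥0∞), 0 < s ∧ 0 < ρ ∧ ρ ≤ 1 ∧ 0 < R ∧ 0 < κ ∧ K ≠ ⊤ ∧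
      μH[(N : ℝ) - 1] (frontier Ω ∩ Metric.ball x₀ s) < ⊤ ∧
      ∀ ε, 0 < ε → ε < R → ∀ φ : Euc N → ℝ, ContDiff ℝ ∞ φ →
        eLpNorm (fun x => φ x - coneMean Ω e ρ ε φ x) (ENNReal.ofReal r)
          ((μH[(N : ℝ) - 1]).restrict (frontier Ω ∩ Metric.ball x₀ s)) ≤
        K * ENNReal.ofReal (ε ^ κ) *
          eLpNorm (gradient φ) (ENNReal.ofReal p) (volume.restrict Ω) := by
  obtain ⟨e, ρ, R, he, hρ, hρ1, hR, hcone⟩ := hs.exists_cone hΩ hx₀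
  have hcone' := fun x hx hxd y hy t ht htR => (hcone x hx hxd y hy t ht htR).1
  obtain ⟨C, hC, hAhl⟩ := exists_hausdorffMeasure_patch_le hN hΩ he hρ hcone'
  set S := frontier Ω ∩ Metric.ball x₀ (R / 4) with hS
  have hSm : MeasurableSet S := isClosed_frontier.measurableSet.inter measurableSet_ball
  have hfin : μH[(N : ℝ) - 1] S < ⊤ := by
    have := hAhl x₀ (R / 4) (by positivity)
    rw [inter_assoc, inter_self] at this
    exact this.trans_lt (ENNReal.mul_lt_top hC.lt_top ENNReal.ofReal_lt_top)
  set ν : Measure (Euc N) := (μH[(N : ℝ) - 1]).restrict S with hνdef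
  have : IsFiniteMeasure ν := ⟨by rw [hνdef, Measure.restrict_apply_univ]; exact hfin⟩
  have hν : ∀ (z : Euc N) (s : ℝ), 0 < s →
      ν (Metric.ball z s) ≤ C * ENNReal.ofReal (s ^ (N - 1)) := by
    intro z s hs
    rw [hνdef, Measure.restrict_apply measurableSet_ball, inter_comm]
    exact hAhl z s hs
  obtain ⟨K, κ, hK, hκ, hest⟩ :=
    exists_lintegral_coneIntegral_rpow_le (by omega) ν hC hν hp hpr hsub (e := e) hρ hρ1.le
  have hp0 : 0 < p := by linarith
  have hr0 : 0 < r := by linarith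
  set K₀ := ENNReal.ofReal ((∫ y, tent e ρ y)⁻¹ * 2)
  refine ⟨R / 4, e, ρ, min R 1, κ / r, K₀ * K ^ (1 / r), by positivity, hρ, hρ1.le, by positivity,
    by positivity, ENNReal.mul_ne_top ENNReal.ofReal_ne_top
      (ENNReal.rpow_ne_top_of_nonneg (by positivity) hK), hfin, ?_⟩
  intro ε hε hεR φ hφ
  set G : Euc N → ℝ≥0∞ := Ω.indicator fun z => ‖gradient φ z‖ₑ with hGdef
  have hG : Measurable G :=
    ((continuous_gradient hφ).measurable.enorm).indicator hΩ.measurableSet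
  have hJ : (∫⁻ z, G z ^ p) ^ (1 / p) =
      eLpNorm (gradient φ) (ENNReal.ofReal p) (volume.restrict Ω) := by
    rw [eLpNorm_eq_lintegral_rpow_enorm_toReal (by simpa using hp0) ENNReal.ofReal_ne_top,
      ENNReal.toReal_ofReal hp0.le, ← lintegral_indicator hΩ.measurableSet]
    congr 2
    ext z
    by_cases hz : z ∈ Ω
    · simp [hGdef, hz]
    · simp [hGdef, hz, hp0]
  rw [eLpNorm_eq_lintegral_rpow_enorm_toReal (by simpa using hr0) ENNReal.ofReal_ne_top,
      ENNReal.toReal_ofReal hr0.le]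
  calc (∫⁻ x, ‖φ x - coneMean Ω e ρ ε φ x‖ₑ ^ r ∂ν) ^ (1 / r)
      ≤ (∫⁻ x, K₀ ^ r * (∫⁻ t in Ioc 0 ε, ∫⁻ y in Metric.ball e ρ, G (x + t • y)) ^ r ∂ν)
          ^ (1 / r) := by
        gcongr 1
        refine lintegral_mono_ae ?_
        filter_upwards [ae_restrict_mem hSm] with x hx
        rw [← ENNReal.mul_rpow_of_nonneg _ _ hr0.le]
        gcongr
        refine enorm_sub_coneMean_le he hρ hρ1.le hε hφ fun y hy t ht htε => ?_
        exact hcone' x hx.1 (lt_of_lt_of_le hx.2 (by linarith)) y hy t ht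
          (lt_of_le_of_lt htε (hεR.trans_le (min_le_left _ _)))
    _ ≤ (K₀ ^ r * (K * ENNReal.ofReal (ε ^ κ) * (∫⁻ z, G z ^ p) ^ (r / p))) ^ (1 / r) := by
        rw [lintegral_const_mul' _ _ (ENNReal.rpow_ne_top_of_nonneg hr0.le ENNReal.ofReal_ne_top)]
        gcongr
        exact hest ε hε (hεR.le.trans (min_le_right _ _)) G hG
    _ = _ := by
        have h1r : 0 ≤ 1 / r := by positivity
        rw [ENNReal.mul_rpow_of_nonneg _ _ h1r, ENNReal.mul_rpow_of_nonneg _ _ h1r,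
          ENNReal.mul_rpow_of_nonneg _ _ h1r, ← ENNReal.rpow_mul, ← ENNReal.rpow_mul,
          mul_one_div_cancel hr0.ne', ENNReal.rpow_one, ENNReal.ofReal_rpow_of_nonneg
            (by positivity) h1r, ← Real.rpow_mul hε.le, ← hJ, mul_one_div, ← mul_assoc, ← mul_assoc]
        congr 2
        field_simp

lemma Bornology.IsBounded.memLp_restrict {N : ℕ} {Ω : Set (Euc N)} (hΩ : Bornology.IsBounded Ω)
    {F : Type*} [NormedAddCommGroup F] {f : Euc N → F} (hf : Continuous f)
    {μ : Measure (Euc N)} (hμ : μ Ω < ⊤) (hm : MeasurableSet Ω) (q : ℝ≥0∞) :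
    MemLp f q (μ.restrict Ω) := by
  obtain ⟨C, hC⟩ := hΩ.isCompact_closure.exists_bound_of_continuousOn hf.continuousOn
  have : IsFiniteMeasure (μ.restrict Ω) := ⟨by rwa [Measure.restrict_apply_univ]⟩
  refine MemLp.of_bound hf.aestronglyMeasurable C ?_
  filter_upwards [ae_restrict_mem hm] with x hx using hC x (subset_closure hx)

lemma ofReal_integral_abs_le_eLpNorm {N : ℕ} {Ω : Set (Euc N)} {p : ℝ} (hp : 1 < p)
    {φ : Euc N → ℝ} (hφ : IntegrableOn φ Ω) :
    ENNReal.ofReal (∫ z in Ω, |φ z|) ≤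
      eLpNorm φ (ENNReal.ofReal p) (volume.restrict Ω) * volume Ω ^ (1 - 1 / p) := by
  have h := eLpNorm_le_eLpNorm_mul_rpow_measure_univ (p := 1) (q := ENNReal.ofReal p)
    (by simpa using hp.le) hφ.aestronglyMeasurable
  rw [ENNReal.toReal_ofReal (by linarith), ENNReal.toReal_one, div_one,
    Measure.restrict_apply_univ, eLpNorm_one_eq_lintegral_enorm] at h
  refine le_trans (le_of_eq ?_) h
  rw [ofReal_integral_eq_lintegral_ofReal hφ.abs (ae_of_all _ fun _ => abs_nonneg _)]
  simp_rw [← ofReal_norm, Real.norm_eq_abs]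

lemma eLpNorm_restrict_union_le {X F : Type*} [MeasurableSpace X] [NormedAddCommGroup F]
    {r : ℝ} (hr : 1 ≤ r) (μ : Measure X) (f : X → F) (A B : Set X) :
    eLpNorm f (ENNReal.ofReal r) (μ.restrict (A ∪ B)) ≤
      eLpNorm f (ENNReal.ofReal r) (μ.restrict A) + eLpNorm f (ENNReal.ofReal r) (μ.restrict B) := by
  have hr0 : 0 < r := by linarith
  simp only [eLpNorm_eq_lintegral_rpow_enorm_toReal (p := ENNReal.ofReal r) (by simpa using hr0)
    ENNReal.ofReal_ne_top, ENNReal.toReal_ofReal hr0.le]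
  refine le_trans ?_ (ENNReal.rpow_add_le_add_rpow _ _ (by positivity)
    ((div_le_one hr0).2 hr))
  gcongr
  exact lintegral_union_le _ _ _

/-- An equibounded and equi-Lipschitz sequence of families of functions on a separable space has a
pointwise convergent subsequence. -/
lemma exists_subseq_tendsto_of_equiLipschitz {X ι : Type*} [PseudoMetricSpace X]
    [TopologicalSpace.SeparableSpace X] [Nonempty X] [Countable ι] (f : ℕ → ι → X → ℝ)
    (B L : ι → ℝ) (hB : ∀ k i x, |f k i x| ≤ B i)
    (hL : ∀ k i x y, |f k i x - f k i y| ≤ L i * dist x y) :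
    ∃ ns : ℕ → ℕ, StrictMono ns ∧ ∀ i x, ∃ l, Tendsto (fun k => f (ns k) i x) atTop (𝓝 l) := by
  set D := TopologicalSpace.denseSeq X
  set S : Set (ι × ℕ → ℝ) := Set.pi univ fun j => Icc (-B j.1) (B j.1)
  have hS : IsSeqCompact S := (isCompact_univ_pi fun j => isCompact_Icc).isSeqCompact
  obtain ⟨a, -, ns, hns, hlim⟩ := hS (x := fun k j => f k j.1 (D j.2))
    fun k j _ => abs_le.1 (hB k j.1 _)
  rw [tendsto_pi_nhds] at hlim
  refine ⟨ns, hns, fun i x => ?_⟩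
  apply cauchySeq_tendsto_of_complete
  rw [Metric.cauchySeq_iff']
  intro δ hδ
  obtain ⟨d, hd⟩ : ∃ d, dist x (D d) < δ / 4 / (|L i| + 1) :=
    (TopologicalSpace.denseRange_denseSeq X).exists_dist_lt x (by positivity)
  have hnear : ∀ k, |f k i x - f k i (D d)| ≤ δ / 4 := by
    intro k
    refine (hL k i x (D d)).trans ?_
    calc L i * dist x (D d) ≤ (|L i| + 1) * (δ / 4 / (|L i| + 1)) := by
          gcongr
          linarith [le_abs_self (L i)]
      _ = δ / 4 := by field_simp
  obtain ⟨n₀, hn₀⟩ := Metric.cauchySeq_iff'.1 (hlim (i, d)).cauchySeq (δ / 4) (by positivity)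
  refine ⟨n₀, fun n hn => ?_⟩
  have h1 := hn₀ n hn
  have h2 := hnear (ns n)
  have h3 := hnear (ns n₀)
  simp only [Function.comp, Real.dist_eq] at h1 ⊢
  rw [abs_lt] at *
  rw [abs_le] at h2 h3
  constructor <;> linarith [h1.1, h1.2, h2.1, h2.2, h3.1, h3.2]

lemma tendsto_eLpNorm_sub_of_bounded {X : Type*} [MeasurableSpace X] (ν : Measure X)
    [IsFiniteMeasure ν] {r : ℝ} (hr : 1 ≤ r) {f : ℕ → X → ℝ} {h : X → ℝ} {B : ℝ}
    (hf : ∀ k, Measurable (f k)) (hB : ∀ k x, |f k x| ≤ B)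
    (hlim : ∀ x, Tendsto (fun k => f k x) atTop (𝓝 (h x))) :
    Tendsto (fun k => eLpNorm (fun x => f k x - h x) (ENNReal.ofReal r) ν) atTop (𝓝 0) := by
  have hr0 : 0 < r := by linarith
  have hh : Measurable h := measurable_of_tendsto_metrizable hf (tendsto_pi_nhds.2 hlim)
  have hhB : ∀ x, |h x| ≤ B := fun x =>
    le_of_tendsto (hlim x).abs (Eventually.of_forall fun k => hB k x)
  simp only [eLpNorm_eq_lintegral_rpow_enorm_toReal (p := ENNReal.ofReal r) (by simpa using hr0)
    ENNReal.ofReal_ne_top, ENNReal.toReal_ofReal hr0.le]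
  have hmain : Tendsto (fun k => ∫⁻ x, ‖f k x - h x‖ₑ ^ r ∂ν) atTop (𝓝 (∫⁻ _, 0 ∂ν)) := by
    refine tendsto_lintegral_of_dominated_convergence (fun _ => ENNReal.ofReal (2 * B) ^ r)
      (fun k => ((hf k).sub hh).enorm.pow_const r) (fun k => ae_of_all _ fun x => ?_) ?_
      (ae_of_all _ fun x => ?_)
    · refine ENNReal.rpow_le_rpow ?_ hr0.le
      rw [← ofReal_norm]
      refine ENNReal.ofReal_le_ofReal ((norm_sub_le _ _).trans ?_)
      have := hB k x; have := hhB x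
      simp only [Real.norm_eq_abs]; linarith
    · rw [lintegral_const]
      exact ENNReal.mul_ne_top (ENNReal.rpow_ne_top_of_nonneg hr0.le ENNReal.ofReal_ne_top)
        (measure_ne_top _ _)
    · have h1 : Tendsto (fun k => ‖f k x - h x‖ₑ) atTop (𝓝 0) := by
        have := ((hlim x).sub_const (h x)).enorm
        simpa using this
      have h2 := ((ENNReal.continuous_rpow_const (y := r)).tendsto 0).comp h1
      rw [ENNReal.zero_rpow_of_pos hr0] at h2
      exact h2
  rw [lintegral_zero] at hmain
  have h2 := ((ENNReal.continuous_rpow_const (y := 1 / r)).tendsto 0).comp hmain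
  rw [ENNReal.zero_rpow_of_pos (by positivity)] at h2
  exact h2

/-- The norm of `W^{1,p}(Ω)` (up to equivalence) of a differentiable function. -/
def smoothW1pNorm {N : ℕ} (Ω : Set (Euc N)) (p : ℝ) (φ : Euc N → ℝ) : ℝ≥0∞ :=
  eLpNorm φ (ENNReal.ofReal p) (volume.restrict Ω) +
    eLpNorm (gradient φ) (ENNReal.ofReal p) (volume.restrict Ω)

/-- The trace inequality `W^{1,p}(Ω) → L^r(A)` for smooth functions. -/
def TraceBounded {N : ℕ} (Ω : Set (Euc N)) (p r : ℝ) (A : Set (Euc N)) : Prop :=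
  ∃ C : ℝ≥0∞, C ≠ ⊤ ∧ ∀ φ : Euc N → ℝ, ContDiff ℝ ∞ φ →
    eLpNorm φ (ENNReal.ofReal r) ((μH[(N : ℝ) - 1]).restrict A) ≤ C * smoothW1pNorm Ω p φ

/-- Compactness of the trace `W^{1,p}(Ω) → L^r(A)`, for smooth functions. -/
def TraceCompact {N : ℕ} (Ω : Set (Euc N)) (p r : ℝ) (A : Set (Euc N)) : Prop :=
  ∀ φ : ℕ → Euc N → ℝ, (∀ n, ContDiff ℝ ∞ (φ n)) → ∀ M : ℝ≥0∞, M ≠ ⊤ →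
    (∀ n, smoothW1pNorm Ω p (φ n) ≤ M) → ∃ ns : ℕ → ℕ, StrictMono ns ∧
      ∀ δ : ℝ≥0∞, 0 < δ → ∃ n₀, ∀ m, n₀ ≤ m → ∀ n, n₀ ≤ n →
        eLpNorm (fun x => φ (ns m) x - φ (ns n) x) (ENNReal.ofReal r)
          ((μH[(N : ℝ) - 1]).restrict A) ≤ δ

section patch

variable {N : ℕ} {Ω : Set (Euc N)} {p r : ℝ}

lemma TraceBounded.union (hr : 1 ≤ r) {A B : Set (Euc N)} (hA : TraceBounded Ω p r A)
    (hB : TraceBounded Ω p r B) : TraceBounded Ω p r (A ∪ B) := by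
  obtain ⟨C, hC, hCA⟩ := hA
  obtain ⟨D, hD, hDB⟩ := hB
  refine ⟨C + D, ENNReal.add_ne_top.2 ⟨hC, hD⟩, fun φ hφ => ?_⟩
  rw [add_mul]
  exact (eLpNorm_restrict_union_le hr _ _ _ _).trans (add_le_add (hCA φ hφ) (hDB φ hφ))

lemma TraceBounded.mono {A B : Set (Euc N)} (hAB : A ⊆ B) (hB : TraceBounded Ω p r B) :
    TraceBounded Ω p r A := by
  obtain ⟨D, hD, hDB⟩ := hB
  exact ⟨D, hD, fun φ hφ =>
    (eLpNorm_mono_measure _ (Measure.restrict_mono hAB le_rfl)).trans (hDB φ hφ)⟩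

lemma TraceCompact.mono {A B : Set (Euc N)} (hAB : A ⊆ B) (hB : TraceCompact Ω p r B) :
    TraceCompact Ω p r A := by
  intro φ hφ M hM hb
  obtain ⟨ns, hns, h⟩ := hB φ hφ M hM hb
  refine ⟨ns, hns, fun δ hδ => ?_⟩
  obtain ⟨n₀, hn₀⟩ := h δ hδ
  exact ⟨n₀, fun m hm n hn =>
    (eLpNorm_mono_measure _ (Measure.restrict_mono hAB le_rfl)).trans (hn₀ m hm n hn)⟩

lemma TraceCompact.union (hr : 1 ≤ r) {A B : Set (Euc N)} (hA : TraceCompact Ω p r A)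
    (hB : TraceCompact Ω p r B) : TraceCompact Ω p r (A ∪ B) := by
  intro φ hφ M hM hb
  obtain ⟨ns, hns, h⟩ := hA φ hφ M hM hb
  obtain ⟨ms, hms, h'⟩ := hB (φ ∘ ns) (fun n => hφ _) M hM (fun n => hb _)
  refine ⟨ns ∘ ms, hns.comp hms, fun δ hδ => ?_⟩
  obtain ⟨n₀, hn₀⟩ := h (δ / 2) (ENNReal.half_pos hδ.ne')
  obtain ⟨n₁, hn₁⟩ := h' (δ / 2) (ENNReal.half_pos hδ.ne')
  refine ⟨max n₀ n₁, fun m hm n hn => ?_⟩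
  refine (eLpNorm_restrict_union_le hr _ _ _ _).trans ?_
  rw [← ENNReal.add_halves δ]
  refine add_le_add (hn₀ _ ?_ _ ?_) (hn₁ _ (le_of_max_le_right hm) _ (le_of_max_le_right hn))
  · exact (le_of_max_le_left hm).trans (hms.id_le m)
  · exact (le_of_max_le_left hn).trans (hms.id_le n)

lemma exists_traceBounded_nhds (hN : 2 ≤ N) (hΩ : IsOpen Ω) (hb : Bornology.IsBounded Ω)
    (hs : HasSmoothBoundary Ω) (hp : 1 < p) (hpr : p ≤ r)
    (hsub : (N : ℝ) / p - ((N : ℝ) - 1) / r < 1) {x₀ : Euc N} (hx₀ : x₀ ∈ frontier Ω) :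
    ∃ s > 0, μH[(N : ℝ) - 1] (frontier Ω ∩ Metric.ball x₀ s) < ⊤ ∧
      TraceBounded Ω p r (frontier Ω ∩ Metric.ball x₀ s) ∧
      TraceCompact Ω p r (frontier Ω ∩ Metric.ball x₀ s) := by
  obtain ⟨s, e, ρ, R, κ, K, hs0, hρ, hρ1, hR, hκ, hK, hfin, hest⟩ :=
    exists_patch_coneMean hN hΩ hs hp hpr hsub hx₀
  have hr : 1 ≤ r := by linarith
  have hr0 : 0 < r := by linarith
  have hr1' : 1 ≤ ENNReal.ofReal r := by simpa using hr
  set S := frontier Ω ∩ Metric.ball x₀ s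
  set ν : Measure (Euc N) := (μH[(N : ℝ) - 1]).restrict S with hνdef
  have : IsFiniteMeasure ν := ⟨by rw [hνdef, Measure.restrict_apply_univ]; exact hfin⟩
  have hφint : ∀ φ : Euc N → ℝ, ContDiff ℝ ∞ φ → IntegrableOn φ Ω := fun φ hφ =>
    memLp_one_iff_integrable.1 (hb.memLp_restrict hφ.continuous hb.measure_lt_top hΩ.measurableSet 1)
  have hVtop : volume Ω ^ (1 - 1 / p) ≠ ⊤ := by
    refine ENNReal.rpow_ne_top_of_nonneg ?_ hb.measure_lt_top.ne
    rw [sub_nonneg, div_le_one (by linarith)]; exact hp.le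
  have hc := integral_tent_pos (e := e) hρ
  have hmeasA : ∀ φ : Euc N → ℝ, ContDiff ℝ ∞ φ → ∀ ε, 0 < ε →
      AEStronglyMeasurable (coneMean Ω e ρ ε φ) ν := fun φ hφ ε hε =>
    (continuous_coneMean hρ hε (hφint φ hφ)).aestronglyMeasurable
  refine ⟨s, hs0, hfin, ?_, ?_⟩
  · set ε := R / 2
    have hε : 0 < ε := by positivity
    set D := (∫ y, tent e ρ y)⁻¹ * (ε ^ N)⁻¹ with hD
    have hD0 : 0 ≤ D := by positivity
    set C₂ := ν univ ^ (1 / r) * (ENNReal.ofReal D * volume Ω ^ (1 - 1 / p))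
    refine ⟨K * ENNReal.ofReal (ε ^ κ) + C₂, ENNReal.add_ne_top.2
      ⟨ENNReal.mul_ne_top hK ENNReal.ofReal_ne_top, ENNReal.mul_ne_top
        (ENNReal.rpow_ne_top_of_nonneg (by positivity) (measure_ne_top _ _))
        (ENNReal.mul_ne_top ENNReal.ofReal_ne_top hVtop)⟩, fun φ hφ => ?_⟩
    have h1 := hest ε hε (by simp only [ε]; linarith) φ hφ
    have h2 : eLpNorm (coneMean Ω e ρ ε φ) (ENNReal.ofReal r) ν ≤
        C₂ * eLpNorm φ (ENNReal.ofReal p) (volume.restrict Ω) := by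
      have h3 := eLpNorm_le_of_ae_bound (p := ENNReal.ofReal r) (μ := ν) (f := coneMean Ω e ρ ε φ)
        (ae_of_all _ fun x => abs_coneMean_le (e := e) hρ hρ1 hε (hφint φ hφ) x)
      rw [ENNReal.toReal_ofReal hr0.le, ← one_div, ENNReal.ofReal_mul hD0] at h3
      refine h3.trans ?_
      simp only [C₂]
      rw [mul_assoc, mul_assoc]
      gcongr
      rw [mul_comm (volume Ω ^ _)]
      exact ofReal_integral_abs_le_eLpNorm hp (hφint φ hφ)
    calc eLpNorm φ (ENNReal.ofReal r) ν
        = eLpNorm ((fun x => φ x - coneMean Ω e ρ ε φ x) + coneMean Ω e ρ ε φ)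
            (ENNReal.ofReal r) ν := by
          congr 1; ext x; simp
      _ ≤ _ + _ := eLpNorm_add_le (hφ.continuous.aestronglyMeasurable.sub (hmeasA φ hφ ε hε))
          (hmeasA φ hφ ε hε) hr1'
      _ ≤ K * ENNReal.ofReal (ε ^ κ) * smoothW1pNorm Ω p φ + C₂ * smoothW1pNorm Ω p φ := by
          refine add_le_add (h1.trans ?_) (h2.trans ?_)
          · gcongr; exact le_add_self
          · gcongr; exact le_self_add
      _ = _ := by rw [add_mul]
  · intro φ hφ M hM hφM
    set ε : ℕ → ℝ := fun i => R / 2 / (i + 1) with hεdef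
    have hε : ∀ i, 0 < ε i := fun i => by positivity
    have hεR : ∀ i, ε i < R := fun i => by
      have : ε i ≤ R / 2 := div_le_self (by positivity) (by simp)
      linarith
    set Λ := (M * volume Ω ^ (1 - 1 / p)).toReal
    have hΛ : ∀ n, ∫ z in Ω, |φ n z| ≤ Λ := by
      intro n
      have h1 := (ofReal_integral_abs_le_eLpNorm hp (hφint (φ n) (hφ n))).trans
        (mul_le_mul_left (le_self_add.trans (hφM n)) _)
      exact (ENNReal.ofReal_le_iff_le_toReal (ENNReal.mul_ne_top hM hVtop)).1 h1
    obtain ⟨ns, hns, hlim⟩ := exists_subseq_tendsto_of_equiLipschitz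
      (fun k i x => coneMean Ω e ρ (ε i) (φ k) x)
      (fun i => (∫ y, tent e ρ y)⁻¹ * (ε i ^ N)⁻¹ * Λ)
      (fun i => (∫ y, tent e ρ y)⁻¹ * (ε i ^ N)⁻¹ * (ε i)⁻¹ * Λ)
      (fun k i x => (abs_coneMean_le hρ hρ1 (hε i) (hφint _ (hφ k)) x).trans (by
        have := hε i
        gcongr
        exact hΛ k))
      (fun k i x y => (abs_coneMean_sub_le hρ (hε i) (hφint _ (hφ k)) x y).trans (by
        have := hε i
        gcongr
        exact hΛ k))
    choose h hh using hlim
    refine ⟨ns, hns, fun δ hδ => ?_⟩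
    have hsmall : Tendsto (fun i => K * ENNReal.ofReal (ε i ^ κ) * M) atTop (𝓝 0) := by
      have h1 : Tendsto ε atTop (𝓝 0) := by
        have := (tendsto_one_div_add_atTop_nhds_zero_nat (𝕜 := ℝ)).const_mul (R / 2)
        simpa [hεdef, div_eq_mul_inv] using this
      have h2 : Tendsto (fun i => ENNReal.ofReal (ε i ^ κ)) atTop (𝓝 0) := by
        have := ENNReal.tendsto_ofReal
          (((Real.continuousAt_rpow_const 0 κ (Or.inr hκ.le)).tendsto).comp h1)
        rwa [Real.zero_rpow hκ.ne', ENNReal.ofReal_zero] at this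
      have h3 := ENNReal.Tendsto.mul_const (ENNReal.Tendsto.const_mul h2 (Or.inr hK)) (b := M)
        (Or.inr hM)
      simpa using h3
    have hδ4 : 0 < δ / 4 := ENNReal.div_pos hδ.ne' (by simp)
    obtain ⟨i, hi⟩ := (hsmall.eventually_le_const hδ4).exists
    have happ : ∀ n, eLpNorm (fun x => φ n x - coneMean Ω e ρ (ε i) (φ n) x) (ENNReal.ofReal r) ν
        ≤ δ / 4 := fun n =>
      (hest (ε i) (hε i) (hεR i) (φ n) (hφ n)).trans (le_trans (by
        gcongr
        exact le_add_self.trans (hφM n)) hi)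
    have hconv := tendsto_eLpNorm_sub_of_bounded ν hr
      (f := fun k => coneMean Ω e ρ (ε i) (φ (ns k))) (h := h i)
      (B := (∫ y, tent e ρ y)⁻¹ * (ε i ^ N)⁻¹ * Λ)
      (fun k => (continuous_coneMean hρ (hε i) (hφint _ (hφ _))).measurable)
      (fun k x => (abs_coneMean_le hρ hρ1 (hε i) (hφint _ (hφ _)) x).trans (by
        have := hε i
        gcongr
        exact hΛ _)) (hh i)
    obtain ⟨n₀, hn₀⟩ := eventually_atTop.1 (hconv.eventually_le_const hδ4)
    have hhm : AEStronglyMeasurable (h i) ν :=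
      (measurable_of_tendsto_metrizable
        (fun k => (continuous_coneMean hρ (hε i) (hφint _ (hφ (ns k)))).measurable)
        (tendsto_pi_nhds.2 (hh i))).aestronglyMeasurable
    have hhalf : ∀ m, n₀ ≤ m → eLpNorm (fun x => φ (ns m) x - h i x) (ENNReal.ofReal r) ν ≤
        δ / 2 := by
      intro m hm
      have hA := hmeasA (φ (ns m)) (hφ _) (ε i) (hε i)
      calc eLpNorm (fun x => φ (ns m) x - h i x) (ENNReal.ofReal r) ν
          = eLpNorm ((fun x => φ (ns m) x - coneMean Ω e ρ (ε i) (φ (ns m)) x) +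
              fun x => coneMean Ω e ρ (ε i) (φ (ns m)) x - h i x) (ENNReal.ofReal r) ν := by
            congr 1; ext x; simp
        _ ≤ _ + _ := eLpNorm_add_le ((hφ _).continuous.aestronglyMeasurable.sub hA)
            (hA.sub hhm) hr1'
        _ ≤ δ / 4 + δ / 4 := add_le_add (happ _) (hn₀ m hm)
        _ = δ / 2 := by
            rw [← ENNReal.add_div, ← two_mul]
            rw [show (4 : ℝ≥0∞) = 2 * 2 by norm_num]
            exact ENNReal.mul_div_mul_left _ _ (by simp) (by simp)
    refine ⟨n₀, fun m hm n hn => ?_⟩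
    have hm1 := (hφ (ns m)).continuous.aestronglyMeasurable (μ := ν)
    have hm2 := (hφ (ns n)).continuous.aestronglyMeasurable (μ := ν)
    calc eLpNorm (fun x => φ (ns m) x - φ (ns n) x) (ENNReal.ofReal r) ν
        = eLpNorm ((fun x => φ (ns m) x - h i x) - fun x => φ (ns n) x - h i x)
            (ENNReal.ofReal r) ν := by
          congr 1; ext x; simp
      _ ≤ _ + _ := eLpNorm_sub_le (hm1.sub hhm) (hm2.sub hhm) hr1'
      _ ≤ δ / 2 + δ / 2 := add_le_add (hhalf m hm) (hhalf n hn)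
      _ = δ := ENNReal.add_halves δ

lemma isCompact_frontier_of_isBounded (hb : Bornology.IsBounded Ω) : IsCompact (frontier Ω) :=
  hb.isCompact_closure.of_isClosed_subset isClosed_frontier frontier_subset_closure

lemma traceBounded_frontier (hN : 2 ≤ N) (hΩ : IsOpen Ω) (hb : Bornology.IsBounded Ω)
    (hs : HasSmoothBoundary Ω) (hp : 1 < p) (hpr : p ≤ r)
    (hsub : (N : ℝ) / p - ((N : ℝ) - 1) / r < 1) :
    μH[(N : ℝ) - 1] (frontier Ω) < ⊤ ∧ TraceBounded Ω p r (frontier Ω) ∧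
      TraceCompact Ω p r (frontier Ω) := by
  have hr : 1 ≤ r := by linarith
  refine (isCompact_frontier_of_isBounded hb).induction_on
    (p := fun A => μH[(N : ℝ) - 1] A < ⊤ ∧ TraceBounded Ω p r A ∧ TraceCompact Ω p r A)
    ?_ ?_ ?_ ?_
  · refine ⟨by simp, ⟨0, by simp, fun φ _ => by simp⟩, fun φ _ M _ _ => ⟨id, strictMono_id,
      fun δ _ => ⟨0, fun m _ n _ => by simp⟩⟩⟩
  · exact fun A B hAB h => ⟨(measure_mono hAB).trans_lt h.1, h.2.1.mono hAB, h.2.2.mono hAB⟩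
  · exact fun A B hA hB => ⟨(measure_union_le _ _).trans_lt (ENNReal.add_lt_top.2 ⟨hA.1, hB.1⟩),
      hA.2.1.union hr hB.2.1, hA.2.2.union hr hB.2.2⟩
  · intro x hx
    obtain ⟨s, hs0, h⟩ := exists_traceBounded_nhds hN hΩ hb hs hp hpr hsub hx
    exact ⟨_, inter_mem_nhdsWithin _ (Metric.ball_mem_nhds x hs0), h⟩

end patch

section convexity

variable {V : Type*} [NormedAddCommGroup V] [InnerProductSpace ℝ V]

lemma norm_half_add_rpow_lt {p : ℝ} (hp : 1 < p) {a b : V} (hab : a ≠ b) :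
    ‖(1 / 2 : ℝ) • (a + b)‖ ^ p < (‖a‖ ^ p + ‖b‖ ^ p) / 2 := by
  have hp0 : 0 < p := by linarith
  by_cases hn : ‖a‖ = ‖b‖
  · have h1 := (norm_midpoint_lt_iff hn).2 hab
    rw [← hn, add_self_div_two]
    exact Real.rpow_lt_rpow (norm_nonneg _) h1 hp0
  · have h1 := (strictConvexOn_rpow hp).2 (norm_nonneg a) (norm_nonneg b) hn
      (by norm_num : (0 : ℝ) < 1 / 2) (by norm_num : (0 : ℝ) < 1 / 2) (by norm_num)
    simp only [smul_eq_mul] at h1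
    refine lt_of_le_of_lt ?_ (h1.trans_eq (by ring))
    refine Real.rpow_le_rpow (norm_nonneg _) ?_ hp0.le
    rw [norm_smul, Real.norm_of_nonneg (by norm_num)]
    linarith [norm_add_le a b]

lemma norm_half_add_rpow_le {p : ℝ} (hp : 1 < p) (a b : V) :
    ‖(1 / 2 : ℝ) • (a + b)‖ ^ p ≤ (‖a‖ ^ p + ‖b‖ ^ p) / 2 := by
  rcases eq_or_ne a b with rfl | h
  · rw [← two_smul ℝ a, smul_smul]; norm_num
  · exact (norm_half_add_rpow_lt hp h).le

/-- Uniform convexity of `‖·‖ ^ p`. -/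
lemma exists_norm_sub_rpow_le [FiniteDimensional ℝ V] {p : ℝ} (hp : 1 < p) {ε : ℝ} (hε : 0 < ε) :
    ∃ C : ℝ, 0 ≤ C ∧ ∀ a b : V, ‖a - b‖ ^ p ≤ ε * (‖a‖ ^ p + ‖b‖ ^ p) +
      C * ((‖a‖ ^ p + ‖b‖ ^ p) / 2 - ‖(1 / 2 : ℝ) • (a + b)‖ ^ p) := by
  have hp0 : 0 < p := by linarith
  have : ProperSpace V := FiniteDimensional.proper ℝ V
  set D : V × V → ℝ := fun w =>
    (‖w.1‖ ^ p + ‖w.2‖ ^ p) / 2 - ‖(1 / 2 : ℝ) • (w.1 + w.2)‖ ^ p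
  have hcn : ∀ f : V × V → V, Continuous f → Continuous fun w => ‖f w‖ ^ p := fun f hf =>
    hf.norm.rpow_const fun _ => Or.inr hp0.le
  have hDc : Continuous D :=
    (((hcn _ continuous_fst).add (hcn _ continuous_snd)).div_const 2).sub
      (hcn _ ((continuous_fst.add continuous_snd).const_smul (1 / 2 : ℝ)))
  set K : Set (V × V) := {w | ‖w.1‖ ^ p + ‖w.2‖ ^ p = 1 ∧ ε ≤ ‖w.1 - w.2‖ ^ p}
  have hle1 : ∀ a b : V, ‖a‖ ^ p + ‖b‖ ^ p = 1 → ‖a‖ ≤ 1 := by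
    intro a b h
    by_contra! hlt
    have := Real.one_lt_rpow hlt hp0
    have := Real.rpow_nonneg (norm_nonneg b) p
    linarith
  have hK : IsCompact K := by
    refine Metric.isCompact_of_isClosed_isBounded ?_ ?_
    · exact (isClosed_eq ((hcn _ continuous_fst).add (hcn _ continuous_snd)) continuous_const).inter
        (isClosed_le continuous_const (hcn _ (continuous_fst.sub continuous_snd)))
    · refine (Metric.isBounded_closedBall (x := (0 : V × V)) (r := 1)).subset fun w hw => ?_
      rw [mem_closedBall_zero_iff, Prod.norm_def]
      exact max_le (hle1 _ _ hw.1) (hle1 w.2 w.1 (by rw [add_comm]; exact hw.1))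
  have hunit : ∃ C : ℝ, 0 ≤ C ∧ ∀ a b : V, ‖a‖ ^ p + ‖b‖ ^ p = 1 →
      ‖a - b‖ ^ p ≤ ε + C * D (a, b) := by
    rcases K.eq_empty_or_nonempty with hemp | hne
    · refine ⟨0, le_rfl, fun a b hab => ?_⟩
      have : (a, b) ∉ K := by rw [hemp]; exact notMem_empty _
      simp only [K, mem_ofPred_eq, not_and, not_le] at this
      simpa using (this hab).le
    · obtain ⟨w₀, hw₀, hmin⟩ := hK.exists_isMinOn hne hDc.continuousOn
      have hpos : 0 < D w₀ := by
        refine sub_pos.2 (norm_half_add_rpow_lt hp fun h => ?_)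
        have := hw₀.2
        rw [h, sub_self, norm_zero, Real.zero_rpow hp0.ne'] at this
        linarith
      refine ⟨2 ^ p / D w₀, by positivity, fun a b hab => ?_⟩
      by_cases hlt : ‖a - b‖ ^ p < ε
      · have : 0 ≤ D (a, b) := sub_nonneg.2 (norm_half_add_rpow_le hp a b)
        have : 0 ≤ 2 ^ p / D w₀ * D (a, b) := by positivity
        linarith
      · have hmem : (a, b) ∈ K := ⟨hab, not_lt.1 hlt⟩
        have h1 : D w₀ ≤ D (a, b) := hmin hmem
        have h2 : ‖a - b‖ ^ p ≤ 2 ^ p := by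
          refine Real.rpow_le_rpow (norm_nonneg _) ?_ hp0.le
          linarith [norm_sub_le a b, hle1 a b hab, hle1 b a (by rw [add_comm]; exact hab)]
        have h3 : 2 ^ p ≤ 2 ^ p / D w₀ * D (a, b) := by
          rw [div_mul_eq_mul_div, le_div_iff₀ hpos]
          gcongr
        linarith
  obtain ⟨C, hC, hCab⟩ := hunit
  refine ⟨C, hC, fun a b => ?_⟩
  set σ := ‖a‖ ^ p + ‖b‖ ^ p with hσ
  have hσ0 : 0 ≤ σ := add_nonneg (Real.rpow_nonneg (norm_nonneg _) _)
    (Real.rpow_nonneg (norm_nonneg _) _)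
  rcases hσ0.eq_or_lt with h0 | hpos
  · have ha : ‖a‖ ^ p = 0 := by
      linarith [Real.rpow_nonneg (norm_nonneg a) p, Real.rpow_nonneg (norm_nonneg b) p]
    have hb : ‖b‖ ^ p = 0 := by
      linarith [Real.rpow_nonneg (norm_nonneg a) p, Real.rpow_nonneg (norm_nonneg b) p]
    rw [Real.rpow_eq_zero (norm_nonneg _) hp0.ne', norm_eq_zero] at ha hb
    subst ha hb
    simp [hσ, Real.zero_rpow hp0.ne']
  · set s := σ ^ (-(1 / p)) with hs
    have hs0 : 0 < s := Real.rpow_pos_of_pos hpos _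
    have hsp : s ^ p = σ⁻¹ := by
      rw [hs, ← Real.rpow_mul hpos.le, neg_mul, one_div_mul_cancel hp0.ne', Real.rpow_neg_one]
    have hscale : ∀ c : V, ‖s • c‖ ^ p = σ⁻¹ * ‖c‖ ^ p := by
      intro c
      rw [norm_smul, Real.norm_of_nonneg hs0.le, Real.mul_rpow hs0.le (norm_nonneg _), hsp]
    have h1 := hCab (s • a) (s • b) (by
      rw [hscale, hscale, ← mul_add, ← hσ, inv_mul_cancel₀ hpos.ne'])
    simp only [D] at h1
    rw [← smul_sub, ← smul_add, smul_comm (1 / 2 : ℝ) s, hscale, hscale, hscale, hscale,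
      ← mul_add, ← hσ, inv_mul_cancel₀ hpos.ne', inv_mul_le_iff₀ hpos] at h1
    refine h1.trans_eq ?_
    field_simp

end convexity

/-- In a convex set on which `E` is uniformly convex, convex combinations of the tails of a sequence
bounded in energy can be chosen to form a Cauchy sequence with respect to `E`. -/
lemma exists_convexHull_cauchy {X : Type*} [AddCommGroup X] [Module ℝ X] (E : X → ℝ) (S : Set X)
    (hS : Convex ℝ S) (hE0 : ∀ a ∈ S, 0 ≤ E a)
    (hE : ∀ ε > 0, ∃ C : ℝ, 0 ≤ C ∧ ∀ a ∈ S, ∀ b ∈ S,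
      E (a - b) ≤ ε * (E a + E b) + C * ((E a + E b) / 2 - E ((1 / 2 : ℝ) • (a + b))))
    (φ : ℕ → X) (hφ : ∀ n, φ n ∈ S) (l : ℝ) (hl : ∀ ε > 0, ∀ᶠ n in atTop, E (φ n) ≤ l + ε) :
    ∃ w : ℕ → X, (∀ n, w n ∈ convexHull ℝ (φ '' Ici n)) ∧
      (∀ ε > 0, ∃ n₀, ∀ m, n₀ ≤ m → ∀ n, n₀ ≤ n → E (w m - w n) ≤ ε) ∧
      ∀ ε > 0, ∀ᶠ n in atTop, E (w n) ≤ l + ε := by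
  set H : ℕ → Set X := fun n => convexHull ℝ (φ '' Ici n) with hH
  have hHS : ∀ n, H n ⊆ S := fun n => convexHull_min (by rintro _ ⟨k, -, rfl⟩; exact hφ k) hS
  have hHmono : ∀ n m, n ≤ m → H m ⊆ H n := fun n m hnm =>
    convexHull_mono (image_mono (Ici_subset_Ici.2 hnm))
  have hmem : ∀ n k, n ≤ k → φ k ∈ H n := fun n k hnk =>
    subset_convexHull ℝ _ ⟨k, hnk, rfl⟩
  set a : ℕ → ℝ := fun n => sInf (E '' H n) with ha
  have hbdd : ∀ n, BddBelow (E '' H n) := fun n =>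
    ⟨0, by rintro _ ⟨x, hx, rfl⟩; exact hE0 x (hHS n hx)⟩
  have hne : ∀ n, (E '' H n).Nonempty := fun n => ⟨_, φ n, hmem n n le_rfl, rfl⟩
  have hale : ∀ n x, x ∈ H n → a n ≤ E x := fun n x hx => csInf_le (hbdd n) ⟨x, hx, rfl⟩
  have hamono : Monotone a := fun n m hnm =>
    csInf_le_csInf (hbdd n) (hne m) (image_mono (hHmono n m hnm))
  have hal : ∀ n, a n ≤ l := by
    intro n
    refine le_of_forall_pos_le_add fun ε hε => ?_
    obtain ⟨k, hk, hnk⟩ := ((hl ε hε).and (eventually_ge_atTop n)).exists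
    exact (hale n _ (hmem n k hnk)).trans hk
  have hconv : Tendsto a atTop (𝓝 (⨆ n, a n)) :=
    tendsto_atTop_ciSup hamono ⟨l, by rintro _ ⟨n, rfl⟩; exact hal n⟩
  have hchoose : ∀ n, ∃ x ∈ H n, E x < a n + 1 / ((n : ℝ) + 1) := by
    intro n
    obtain ⟨_, ⟨x, hx, rfl⟩, hlt⟩ := exists_lt_of_csInf_lt (hne n)
      (lt_add_of_pos_right (a n) (show (0 : ℝ) < 1 / ((n : ℝ) + 1) by positivity))
    exact ⟨x, hx, hlt⟩
  choose w hw hwE using hchoose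
  have hsmall : ∀ ε > 0, ∀ᶠ n : ℕ in atTop, 1 / ((n : ℝ) + 1) < ε := fun ε hε =>
    (tendsto_one_div_add_atTop_nhds_zero_nat (𝕜 := ℝ)).eventually_lt_const hε
  refine ⟨w, hw, fun ε hε => ?_, fun ε hε => ?_⟩
  · have hl0 : 0 ≤ |l| + 1 := by positivity
    obtain ⟨C, hC, hCE⟩ := hE (ε / (4 * (|l| + 1))) (by positivity)
    set δ := ε / (4 * (C + 1)) with hδ
    have hδ0 : 0 < δ := by positivity
    have hcau := Metric.cauchySeq_iff'.1 hconv.cauchySeq δ hδ0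
    obtain ⟨n₁, hn₁⟩ := hcau
    obtain ⟨n₂, hn₂⟩ := eventually_atTop.1 (hsmall δ hδ0)
    have key : ∀ m n, max n₁ n₂ ≤ n → n ≤ m → E (w m - w n) ≤ ε ∧ E (w n - w m) ≤ ε := by
      intro m n hn hnm
      have hmid1 : (1 / 2 : ℝ) • (w m + w n) ∈ H n := by
        rw [smul_add]
        exact convex_convexHull ℝ _ (hHmono n m hnm (hw m)) (hw n) (by norm_num) (by norm_num)
          (by norm_num)
      have hmid := hale n _ hmid1
      have e1 := hwE m
      have e2 := hwE n
      have e3 := hn₂ m ((le_of_max_le_right hn).trans hnm)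
      have e4 := hn₂ n (le_of_max_le_right hn)
      have e5 := hn₁ m ((le_of_max_le_left hn).trans hnm)
      have e6 := hn₁ n (le_of_max_le_left hn)
      rw [Real.dist_eq, abs_lt] at e5 e6
      have hbound : ∀ k, E (w k) ≤ |l| + 1 := fun k => by
        have h1 := hwE k
        have h2 : 1 / ((k : ℝ) + 1) ≤ 1 := by
          rw [div_le_one (by positivity)]; linarith [(Nat.cast_nonneg k : (0 : ℝ) ≤ k)]
        linarith [hal k, le_abs_self l]
      have hdef : (E (w m) + E (w n)) / 2 - E ((1 / 2 : ℝ) • (w m + w n)) ≤ 2 * δ := by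
        linarith [e5.2, e6.1]
      have hfin : ε / (4 * (|l| + 1)) * (E (w m) + E (w n)) + C * (2 * δ) ≤ ε := by
        have h1 : ε / (4 * (|l| + 1)) * (E (w m) + E (w n)) ≤
            ε / (4 * (|l| + 1)) * ((|l| + 1) + (|l| + 1)) := by
          gcongr <;> exact hbound _
        have h2 : ε / (4 * (|l| + 1)) * ((|l| + 1) + (|l| + 1)) = ε / 2 := by
          field_simp; ring
        have h3 : C * (2 * δ) ≤ ε / 2 := by
          rw [hδ]
          calc C * (2 * (ε / (4 * (C + 1)))) = ε / 2 * (C / (C + 1)) := by field_simp; ring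
            _ ≤ ε / 2 * 1 := by
                gcongr
                rw [div_le_one (by positivity)]; linarith
            _ = ε / 2 := mul_one _
        linarith
      constructor
      · refine (hCE _ (hHS m (hw m)) _ (hHS n (hw n))).trans (le_trans ?_ hfin)
        gcongr
      · refine (hCE _ (hHS n (hw n)) _ (hHS m (hw m))).trans (le_trans ?_ hfin)
        rw [add_comm (w n) (w m), add_comm (E (w n))]
        gcongr
    refine ⟨max n₁ n₂, fun m hm n hn => ?_⟩
    rcases le_total n m with h | h
    · exact (key m n hn h).1
    · exact (key n m hm h).2
  · filter_upwards [hsmall ε hε] with n hn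
    linarith [hwE n, hal n]

section Lp

variable {X F : Type*} [MeasurableSpace X] {μ : Measure X} [NormedAddCommGroup F]

lemma exists_tendsto_eLpNorm_of_cauchy [CompleteSpace F] {p : ℝ≥0∞} (hp : 1 ≤ p) {f : ℕ → X → F}
    (hf : ∀ n, MemLp (f n) p μ)
    (hc : ∀ δ : ℝ≥0∞, 0 < δ → ∃ n₀, ∀ m, n₀ ≤ m → ∀ n, n₀ ≤ n →
      eLpNorm (fun x => f m x - f n x) p μ ≤ δ) :
    ∃ g, StronglyMeasurable g ∧ MemLp g p μ ∧
      Tendsto (fun n => eLpNorm (fun x => f n x - g x) p μ) atTop (𝓝 0) := by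
  have : Fact (1 ≤ p) := ⟨hp⟩
  have hcau : CauchySeq fun n => (hf n).toLp (f n) := by
    rw [EMetric.cauchySeq_iff]
    intro ε hε
    obtain ⟨δ, hδ, hδε⟩ := exists_between hε
    obtain ⟨n₀, hn₀⟩ := hc δ hδ
    refine ⟨n₀, fun m hm n hn => ?_⟩
    rw [Lp.edist_toLp_toLp]
    exact (hn₀ m hm n hn).trans_lt hδε
  obtain ⟨g, hg⟩ := cauchySeq_tendsto_of_complete hcau
  refine ⟨g, Lp.stronglyMeasurable g, Lp.memLp g, ?_⟩
  have h := (Lp.tendsto_Lp_iff_tendsto_eLpNorm' _ _).1 hg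
  refine h.congr fun n => eLpNorm_congr_ae ?_
  filter_upwards [(hf n).coeFn_toLp] with x hx
  rw [Pi.sub_apply, hx]

lemma ae_eq_of_tendsto_eLpNorm {p : ℝ≥0∞} (hp : 1 ≤ p) {f : ℕ → X → F} {g h : X → F}
    (hf : ∀ n, AEStronglyMeasurable (f n) μ) (hg : AEStronglyMeasurable g μ)
    (hh : AEStronglyMeasurable h μ)
    (h1 : Tendsto (fun n => eLpNorm (fun x => f n x - g x) p μ) atTop (𝓝 0))
    (h2 : Tendsto (fun n => eLpNorm (fun x => f n x - h x) p μ) atTop (𝓝 0)) : g =ᵐ[μ] h := by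
  have hle : ∀ n, eLpNorm (fun x => g x - h x) p μ ≤
      eLpNorm (fun x => f n x - h x) p μ + eLpNorm (fun x => f n x - g x) p μ := by
    intro n
    refine le_trans (le_of_eq ?_) (eLpNorm_sub_le ((hf n).sub hh) ((hf n).sub hg) hp)
    congr 1; ext x; simp
  have h0 : eLpNorm (fun x => g x - h x) p μ ≤ 0 := by
    have := h2.add h1
    rw [add_zero] at this
    exact ge_of_tendsto' this hle
  have := (eLpNorm_eq_zero_iff (hg.sub hh) (by positivity)).1 (le_antisymm h0 (by simp))
  filter_upwards [this] with x hx
  exact sub_eq_zero.1 hx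

lemma tendsto_eLpNorm_of_tendsto_eLpNorm_sub {p : ℝ≥0∞} (hp : 1 ≤ p) {f : ℕ → X → F} {g : X → F}
    (hf : ∀ n, AEStronglyMeasurable (f n) μ) (hg : MemLp g p μ)
    (h : Tendsto (fun n => eLpNorm (fun x => f n x - g x) p μ) atTop (𝓝 0)) :
    Tendsto (fun n => eLpNorm (f n) p μ) atTop (𝓝 (eLpNorm g p μ)) := by
  have hup : ∀ n, eLpNorm (f n) p μ ≤ eLpNorm g p μ + eLpNorm (fun x => f n x - g x) p μ := by
    intro n
    refine le_trans (le_of_eq ?_) (eLpNorm_add_le hg.1 ((hf n).sub hg.1) hp)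
    congr 1; ext x; simp
  have hlow : ∀ n, eLpNorm g p μ - eLpNorm (fun x => f n x - g x) p μ ≤ eLpNorm (f n) p μ := by
    intro n
    rw [tsub_le_iff_right]
    refine le_trans (le_of_eq ?_) (eLpNorm_sub_le (hf n) ((hf n).sub hg.1) hp)
    congr 1; ext x; simp
  refine tendsto_of_tendsto_of_tendsto_of_le_of_le ?_ ?_ hlow hup
  · simpa using ENNReal.Tendsto.sub (tendsto_const_nhds (x := eLpNorm g p μ)) h
      (Or.inl hg.eLpNorm_ne_top)
  · simpa using (tendsto_const_nhds (x := eLpNorm g p μ)).add h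

lemma tendsto_eLpNorm_of_exponent_le [IsFiniteMeasure μ] {p r : ℝ≥0∞} (hpr : p ≤ r)
    {f : ℕ → X → F} (hf : ∀ n, AEStronglyMeasurable (f n) μ)
    (h : Tendsto (fun n => eLpNorm (f n) r μ) atTop (𝓝 0)) (hp : 1 ≤ p) (hr : r ≠ ⊤) :
    Tendsto (fun n => eLpNorm (f n) p μ) atTop (𝓝 0) := by
  have hexp : 0 ≤ 1 / p.toReal - 1 / r.toReal := by
    have hp' : 1 ≤ p.toReal := by
      rw [← ENNReal.toReal_one]; exact ENNReal.toReal_mono (ne_top_of_le_ne_top hr hpr) hp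
    rw [sub_nonneg]
    exact one_div_le_one_div_of_le (by linarith) (ENNReal.toReal_mono hr hpr)
  refine tendsto_of_tendsto_of_tendsto_of_le_of_le tendsto_const_nhds ?_ (fun n => by simp)
    fun n => eLpNorm_le_eLpNorm_mul_rpow_measure_univ hpr (hf n)
  have := ENNReal.Tendsto.mul_const h (b := μ univ ^ (1 / p.toReal - 1 / r.toReal))
    (Or.inr (ENNReal.rpow_ne_top_of_nonneg hexp (measure_ne_top _ _)))
  simpa using this

lemma tendsto_integral_mul_of_tendsto_eLpNorm [IsFiniteMeasure μ] {p : ℝ≥0∞} (hp : 1 ≤ p)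
    (hpt : p ≠ ⊤) {f : ℕ → X → ℝ} {g h : X → ℝ} (hf : ∀ n, MemLp (f n) p μ) (hg : MemLp g p μ)
    {B : ℝ} (hh : AEStronglyMeasurable h μ) (hB : ∀ x, ‖h x‖ ≤ B)
    (hlim : Tendsto (fun n => eLpNorm (fun x => f n x - g x) p μ) atTop (𝓝 0)) :
    Tendsto (fun n => ∫ x, f n x * h x ∂μ) atTop (𝓝 (∫ x, g x * h x ∂μ)) := by
  have h1 := tendsto_eLpNorm_of_exponent_le hp (fun n => (hf n).1.sub hg.1) hlim le_rfl hpt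
  have hfi : ∀ n, Integrable (f n) μ := fun n => (hf n).integrable hp
  have hgi : Integrable g μ := hg.integrable hp
  refine tendsto_integral_of_L1 _ (hgi.mul_bdd hh (ae_of_all _ hB)).aestronglyMeasurable
    (Eventually.of_forall fun n => (hfi n).mul_bdd hh (ae_of_all _ hB)) ?_
  refine tendsto_of_tendsto_of_tendsto_of_le_of_le tendsto_const_nhds
    (h := fun n => ENNReal.ofReal B * eLpNorm (fun x => f n x - g x) 1 μ) ?_ (fun n => by simp) ?_
  · have := ENNReal.Tendsto.const_mul h1 (a := ENNReal.ofReal B) (Or.inr ENNReal.ofReal_ne_top)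
    rw [mul_zero] at this
    exact this
  · intro n
    simp only
    rw [eLpNorm_one_eq_lintegral_enorm, ← lintegral_const_mul' _ _ ENNReal.ofReal_ne_top]
    refine lintegral_mono fun x => ?_
    rw [← sub_mul, enorm_mul, mul_comm]
    gcongr
    rw [← ofReal_norm]
    exact ENNReal.ofReal_le_ofReal (hB x)

end Lp

section W1p

variable {N : ℕ} {Ω : Set (Euc N)} {p : ℝ}

lemma gradient_sub' {φ ψ : Euc N → ℝ} (hφ : ContDiff ℝ ∞ φ) (hψ : ContDiff ℝ ∞ ψ) (x : Euc N) :
    gradient (fun x => φ x - ψ x) x = gradient φ x - gradient ψ x := by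
  have h1 := hφ.differentiable (by simp) x
  have h2 := hψ.differentiable (by simp) x
  rw [gradient, fderiv_fun_sub h1 h2, map_sub]
  rfl

lemma smoothW1pNorm_sub_le (hp : 1 ≤ p) {φ ψ : Euc N → ℝ} (hφ : ContDiff ℝ ∞ φ)
    (hψ : ContDiff ℝ ∞ ψ) {u : Euc N → ℝ} {g : Euc N → Euc N}
    (hu : AEStronglyMeasurable u (volume.restrict Ω))
    (hg : AEStronglyMeasurable g (volume.restrict Ω)) :
    smoothW1pNorm Ω p (fun x => φ x - ψ x) ≤
      (eLpNorm (fun x => φ x - u x) (ENNReal.ofReal p) (volume.restrict Ω) +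
        eLpNorm (fun x => gradient φ x - g x) (ENNReal.ofReal p) (volume.restrict Ω)) +
      (eLpNorm (fun x => ψ x - u x) (ENNReal.ofReal p) (volume.restrict Ω) +
        eLpNorm (fun x => gradient ψ x - g x) (ENNReal.ofReal p) (volume.restrict Ω)) := by
  have hp' : 1 ≤ ENNReal.ofReal p := by simpa using hp
  have h1 : eLpNorm (fun x => φ x - ψ x) (ENNReal.ofReal p) (volume.restrict Ω) ≤
      eLpNorm (fun x => φ x - u x) (ENNReal.ofReal p) (volume.restrict Ω) +
      eLpNorm (fun x => ψ x - u x) (ENNReal.ofReal p) (volume.restrict Ω) := by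
    refine le_trans (le_of_eq ?_) (eLpNorm_sub_le (hφ.continuous.aestronglyMeasurable.sub hu)
      (hψ.continuous.aestronglyMeasurable.sub hu) hp')
    congr 1; ext x; simp
  have h2 : eLpNorm (gradient fun x => φ x - ψ x) (ENNReal.ofReal p) (volume.restrict Ω) ≤
      eLpNorm (fun x => gradient φ x - g x) (ENNReal.ofReal p) (volume.restrict Ω) +
      eLpNorm (fun x => gradient ψ x - g x) (ENNReal.ofReal p) (volume.restrict Ω) := by
    refine le_trans (le_of_eq ?_) (eLpNorm_sub_le
      ((continuous_gradient hφ).aestronglyMeasurable.sub hg)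
      ((continuous_gradient hψ).aestronglyMeasurable.sub hg) hp')
    congr 1
    funext x
    rw [gradient_sub' hφ hψ, Pi.sub_apply, sub_sub_sub_cancel_right]
  exact (add_le_add h1 h2).trans_eq (by abel)

lemma tendsto_smoothW1pNorm_sub (hp : 1 ≤ p) {φ ψ : ℕ → Euc N → ℝ} (hφ : ∀ n, ContDiff ℝ ∞ (φ n))
    (hψ : ∀ n, ContDiff ℝ ∞ (ψ n)) {u : Euc N → ℝ} {g : Euc N → Euc N}
    (hu : AEStronglyMeasurable u (volume.restrict Ω))
    (hg : AEStronglyMeasurable g (volume.restrict Ω)) (h1 : TendstoW1p Ω p φ u g)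
    (h2 : TendstoW1p Ω p ψ u g) :
    Tendsto (fun n => smoothW1pNorm Ω p fun x => φ n x - ψ n x) atTop (𝓝 0) := by
  refine tendsto_of_tendsto_of_tendsto_of_le_of_le tendsto_const_nhds ?_ (fun n => by simp)
    fun n => smoothW1pNorm_sub_le hp (hφ n) (hψ n) hu hg
  simpa using (h1.1.add h1.2).add (h2.1.add h2.2)

lemma exists_cauchy_smoothW1pNorm (hp : 1 ≤ p) {φ : ℕ → Euc N → ℝ} (hφ : ∀ n, ContDiff ℝ ∞ (φ n))
    {u : Euc N → ℝ} {g : Euc N → Euc N}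
    (hu : AEStronglyMeasurable u (volume.restrict Ω))
    (hg : AEStronglyMeasurable g (volume.restrict Ω)) (h : TendstoW1p Ω p φ u g)
    {δ : ℝ≥0∞} (hδ : 0 < δ) :
    ∃ n₀, ∀ m, n₀ ≤ m → ∀ n, n₀ ≤ n → smoothW1pNorm Ω p (fun x => φ m x - φ n x) ≤ δ := by
  have h1 := h.1.add h.2
  rw [add_zero] at h1
  obtain ⟨n₀, hn₀⟩ := eventually_atTop.1 (h1.eventually_le_const (ENNReal.half_pos hδ.ne'))
  refine ⟨n₀, fun m hm n hn => (smoothW1pNorm_sub_le hp (hφ m) (hφ n) hu hg).trans ?_⟩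
  exact (add_le_add (hn₀ m hm) (hn₀ n hn)).trans_eq (ENNReal.add_halves δ)

/-- Traces of functions in `W^{1,p}(Ω)` belong to `L^r(∂Ω)`, and any smooth approximation in
`W^{1,p}(Ω)` approximates the trace in `L^r(∂Ω)`. -/
lemma IsTrace.tendsto_eLpNorm (hp : 1 < p) {r : ℝ} (hpr : p ≤ r) [IsFiniteMeasure (surf Ω)]
    (hbd : TraceBounded Ω p r (frontier Ω)) (hΩb : Bornology.IsBounded Ω)
    {u : Euc N → ℝ} {g : Euc N → Euc N} {T : Euc N → ℝ}
    (hu : AEStronglyMeasurable u (volume.restrict Ω))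
    (hg : AEStronglyMeasurable g (volume.restrict Ω)) (hT : IsTrace Ω p u g T) :
    MemLp T (ENNReal.ofReal r) (surf Ω) ∧ ∀ φ : ℕ → Euc N → ℝ, (∀ n, ContDiff ℝ ∞ (φ n)) →
      TendstoW1p Ω p φ u g →
      Tendsto (fun n => eLpNorm (fun x => φ n x - T x) (ENNReal.ofReal r) (surf Ω)) atTop (𝓝 0) := by
  obtain ⟨hTp, ψ, hψ, hψW, hψT⟩ := hT
  obtain ⟨C, hC, hCφ⟩ := hbd
  have hr1 : 1 ≤ ENNReal.ofReal r := by simpa using hp.le.trans hpr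
  have hp1 : 1 ≤ ENNReal.ofReal p := by simpa using hp.le
  have hfr : Bornology.IsBounded (frontier Ω) := hΩb.closure.subset frontier_subset_closure
  have hsurf : μH[(N : ℝ) - 1] (frontier Ω) < ⊤ := by
    have := measure_lt_top (surf Ω) univ
    rwa [surf, Measure.restrict_apply_univ] at this
  have hmem : ∀ φ : Euc N → ℝ, ContDiff ℝ ∞ φ → MemLp φ (ENNReal.ofReal r) (surf Ω) := fun φ hφ =>
    hfr.memLp_restrict hφ.continuous hsurf isClosed_frontier.measurableSet _
  obtain ⟨T', -, hT', hlim⟩ := exists_tendsto_eLpNorm_of_cauchy hr1 (fun n => hmem _ (hψ n))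
    (by
      intro δ hδ
      rcases eq_or_ne δ ⊤ with rfl | hδt
      · exact ⟨0, fun _ _ _ _ => le_top⟩
      obtain ⟨n₀, hn₀⟩ := exists_cauchy_smoothW1pNorm hp.le hψ hu hg hψW
        (δ := δ / (C + 1)) (ENNReal.div_pos hδ.ne' (ENNReal.add_ne_top.2 ⟨hC, by simp⟩))
      refine ⟨n₀, fun m hm n hn => (hCφ _ ((hψ m).sub (hψ n))).trans ?_⟩
      refine (mul_le_mul_right (hn₀ m hm n hn) C).trans ?_
      calc C * (δ / (C + 1)) ≤ (C + 1) * (δ / (C + 1)) := by gcongr; exact le_self_add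
        _ ≤ δ := ENNReal.mul_div_le)
  have hae : T' =ᵐ[surf Ω] T := by
    refine ae_eq_of_tendsto_eLpNorm hp1 (fun n => (hmem _ (hψ n)).1) hT'.1 hTp.1 ?_ hψT
    exact tendsto_eLpNorm_of_exponent_le (ENNReal.ofReal_le_ofReal hpr)
      (fun n => (hmem _ (hψ n)).1.sub hT'.1) hlim hp1 ENNReal.ofReal_ne_top
  have hTr : MemLp T (ENNReal.ofReal r) (surf Ω) := hT'.ae_eq hae
  refine ⟨hTr, fun φ hφ hφW => ?_⟩
  have h1 : Tendsto (fun n => eLpNorm (fun x => φ n x - ψ n x) (ENNReal.ofReal r) (surf Ω))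
      atTop (𝓝 0) := by
    refine tendsto_of_tendsto_of_tendsto_of_le_of_le tendsto_const_nhds ?_ (fun n => by simp)
      fun n => hCφ _ ((hφ n).sub (hψ n))
    have := ENNReal.Tendsto.const_mul (tendsto_smoothW1pNorm_sub hp.le hφ hψ hu hg hφW hψW)
      (a := C) (Or.inr hC)
    simpa using this
  refine tendsto_of_tendsto_of_tendsto_of_le_of_le tendsto_const_nhds ?_ (fun n => by simp)
    (h := fun n => eLpNorm (fun x => φ n x - ψ n x) (ENNReal.ofReal r) (surf Ω) +
      eLpNorm (fun x => ψ n x - T' x) (ENNReal.ofReal r) (surf Ω)) fun n => ?_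
  · simpa using h1.add hlim
  · refine le_trans (le_of_eq (eLpNorm_congr_ae ?_)) (eLpNorm_add_le
      ((hmem _ (hφ n)).1.sub (hmem _ (hψ n)).1) ((hmem _ (hψ n)).1.sub hT'.1) hr1)
    filter_upwards [hae] with x hx
    simp [hx]

lemma inner_gradient (φ : Euc N → ℝ) (x v : Euc N) : ⟪gradient φ x, v⟫ = fderiv ℝ φ x v := by
  rw [gradient, InnerProductSpace.toDual_symm_apply]

lemma isWeakGradient_gradient {φ : Euc N → ℝ} (hφ : ContDiff ℝ ∞ φ) :
    IsWeakGradient Ω φ (gradient φ) := by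
  intro ψ hψ hψc hψΩ v
  have hcd : Continuous fun x => fderiv ℝ ψ x v :=
    (hψ.continuous_fderiv (by simp)).clm_apply continuous_const
  have hcd' : Continuous fun x => fderiv ℝ φ x v :=
    (hφ.continuous_fderiv (by simp)).clm_apply continuous_const
  have hcs : HasCompactSupport fun x => fderiv ℝ ψ x v := hψc.fderiv_apply ℝ v
  have hz : ∀ x, x ∉ Ω → ψ x = 0 := fun x hx => image_eq_zero_of_notMem_tsupport fun h => hx (hψΩ h)
  have hz' : ∀ x, x ∉ Ω → fderiv ℝ ψ x v = 0 := fun x hx => by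
    have : fderiv ℝ ψ x = 0 :=
      image_eq_zero_of_notMem_tsupport fun h => hx (hψΩ (tsupport_fderiv_subset ℝ h))
    rw [this]; simp
  rw [setIntegral_eq_integral_of_forall_compl_eq_zero fun x hx => by rw [hz' x hx, mul_zero],
    setIntegral_eq_integral_of_forall_compl_eq_zero fun x hx => by rw [hz x hx, zero_mul]]
  rw [integral_mul_fderiv_eq_neg_fderiv_mul_of_integrable]
  · congr 2
    ext x
    rw [inner_gradient, mul_comm]
  · exact (hcd'.mul hψ.continuous).integrable_of_hasCompactSupport hψc.mul_left
  · exact (hφ.continuous.mul hcd).integrable_of_hasCompactSupport hcs.mul_left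
  · exact (hφ.continuous.mul hψ.continuous).integrable_of_hasCompactSupport hψc.mul_left
  · exact fun x _ => hφ.differentiable (by simp) x
  · exact fun x _ => hψ.differentiable (by simp) x

lemma isWeakGradient_of_tendstoW1p (hΩ : IsOpen Ω) (hΩb : Bornology.IsBounded Ω) (hp : 1 ≤ p)
    {φ : ℕ → Euc N → ℝ} (hφ : ∀ n, ContDiff ℝ ∞ (φ n)) {u : Euc N → ℝ} {g : Euc N → Euc N}
    (hu : MemLp u (ENNReal.ofReal p) (volume.restrict Ω))
    (hg : MemLp g (ENNReal.ofReal p) (volume.restrict Ω)) (h : TendstoW1p Ω p φ u g) :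
    IsWeakGradient Ω u g := by
  intro ψ hψ hψc hψΩ v
  have hp1 : 1 ≤ ENNReal.ofReal p := by simpa using hp
  have : IsFiniteMeasure (volume.restrict Ω) :=
    ⟨by rw [Measure.restrict_apply_univ]; exact hΩb.measure_lt_top⟩
  have hcd : Continuous fun x => fderiv ℝ ψ x v :=
    (hψ.continuous_fderiv (by simp)).clm_apply continuous_const
  obtain ⟨B, hB⟩ := hcd.bounded_above_of_compact_support (hψc.fderiv_apply ℝ v)
  obtain ⟨B', hB'⟩ := hψ.continuous.bounded_above_of_compact_support hψc
  have hmem : ∀ n, MemLp (φ n) (ENNReal.ofReal p) (volume.restrict Ω) := fun n =>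
    hΩb.memLp_restrict (hφ n).continuous hΩb.measure_lt_top hΩ.measurableSet _
  have hmem' : ∀ n, MemLp (gradient (φ n)) (ENNReal.ofReal p) (volume.restrict Ω) := fun n =>
    hΩb.memLp_restrict (continuous_gradient (hφ n)) hΩb.measure_lt_top hΩ.measurableSet _
  have h1 := tendsto_integral_mul_of_tendsto_eLpNorm hp1 ENNReal.ofReal_ne_top hmem hu
    hcd.aestronglyMeasurable hB h.1
  have h2 := tendsto_integral_mul_of_tendsto_eLpNorm hp1 ENNReal.ofReal_ne_top
    (fun n => (hmem' n).inner_const v) (hg.inner_const v) hψ.continuous.aestronglyMeasurable hB'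
    (by
      refine tendsto_of_tendsto_of_tendsto_of_le_of_le tendsto_const_nhds ?_ (fun n => by simp)
        (h := fun n => ENNReal.ofReal ‖v‖ * eLpNorm (fun x => gradient (φ n) x - g x)
          (ENNReal.ofReal p) (volume.restrict Ω)) fun n => ?_
      · simpa using ENNReal.Tendsto.const_mul h.2 (a := ENNReal.ofReal ‖v‖)
          (Or.inr ENNReal.ofReal_ne_top)
      · refine eLpNorm_le_mul_eLpNorm_of_ae_le_mul (ae_of_all _ fun x => ?_) _
        rw [← inner_sub_left, mul_comm]
        exact norm_inner_le_norm _ _)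
  refine tendsto_nhds_unique h1 ?_
  have h3 : ∀ n, ∫ x in Ω, φ n x * fderiv ℝ ψ x v =
      -∫ x in Ω, ⟪gradient (φ n) x, v⟫ * ψ x := fun n => by
    rw [isWeakGradient_gradient (hφ n) ψ hψ hψc hψΩ v]
    simp_rw [mul_comm]
  simp_rw [h3]
  convert h2.neg using 3
  simp_rw [mul_comm]

lemma sobolevEnergy_eq (hp : 0 < p) {u : Euc N → ℝ} {g : Euc N → Euc N}
    (hu : AEStronglyMeasurable u (volume.restrict Ω)) :
    sobolevEnergy Ω p u g = eLpNorm g (ENNReal.ofReal p) (volume.restrict Ω) ^ p +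
      eLpNorm u (ENNReal.ofReal p) (volume.restrict Ω) ^ p := by
  rw [sobolevEnergy, lintegral_add_right' _ (hu.enorm.pow_const p)]
  simp only [eLpNorm_eq_lintegral_rpow_enorm_toReal (p := ENNReal.ofReal p) (by simpa using hp)
    ENNReal.ofReal_ne_top, ENNReal.toReal_ofReal hp.le]
  rw [← ENNReal.rpow_mul, ← ENNReal.rpow_mul, one_div_mul_cancel hp.ne', ENNReal.rpow_one,
    ENNReal.rpow_one]

lemma tendsto_sobolevEnergy (hp : 1 ≤ p) {φ : ℕ → Euc N → ℝ} (hφ : ∀ n, ContDiff ℝ ∞ (φ n))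
    {u : Euc N → ℝ} {g : Euc N → Euc N} (hu : MemLp u (ENNReal.ofReal p) (volume.restrict Ω))
    (hg : MemLp g (ENNReal.ofReal p) (volume.restrict Ω)) (h : TendstoW1p Ω p φ u g) :
    Tendsto (fun n => sobolevEnergy Ω p (φ n) (gradient (φ n))) atTop
      (𝓝 (sobolevEnergy Ω p u g)) := by
  have hp1 : 1 ≤ ENNReal.ofReal p := by simpa using hp
  have hp0 : 0 < p := by linarith
  rw [sobolevEnergy_eq hp0 hu.1]
  simp_rw [fun n => sobolevEnergy_eq (g := gradient (φ n)) hp0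
    ((hφ n).continuous.aestronglyMeasurable (μ := volume.restrict Ω))]
  have h1 := tendsto_eLpNorm_of_tendsto_eLpNorm_sub hp1
    (fun n => (hφ n).continuous.aestronglyMeasurable) hu h.1
  have h2 := tendsto_eLpNorm_of_tendsto_eLpNorm_sub hp1
    (fun n => (continuous_gradient (hφ n)).aestronglyMeasurable) hg h.2
  exact (((ENNReal.continuous_rpow_const (y := p)).tendsto _).comp h2).add
    (((ENNReal.continuous_rpow_const (y := p)).tendsto _).comp h1)

lemma memW1p0_of_sobolevEnergy_eq_zero (hp : 0 < p) {u : Euc N → ℝ} {g : Euc N → Euc N}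
    (h : MemW1p Ω p u g) (h0 : sobolevEnergy Ω p u g = 0) : MemW1p0 Ω p u g := by
  rw [sobolevEnergy_eq hp h.1.1, add_eq_zero, ENNReal.rpow_eq_zero_iff_of_pos hp,
    ENNReal.rpow_eq_zero_iff_of_pos hp] at h0
  refine ⟨h, fun _ _ => 0, fun n => ⟨contDiff_const, ?_, ?_⟩, ?_, ?_⟩
  · exact HasCompactSupport.zero
  · have : tsupport (fun _ : Euc N => (0 : ℝ)) = ∅ := tsupport_eq_empty_iff.2 rfl
    rw [this]; exact empty_subset _
  · have : (fun x => 0 - u x) = -u := by ext x; simp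
    simp_rw [this, eLpNorm_neg, h0.2]
    exact tendsto_const_nhds
  · have : (fun x => gradient (fun _ : Euc N => (0 : ℝ)) x - g x) = -g := by
      funext x
      simp [gradient]
    simp_rw [this, eLpNorm_neg, h0.1]
    exact tendsto_const_nhds

/-- The trace of a function in `W^{1,p}_0(Ω)` vanishes. -/
lemma IsTrace.ae_eq_zero_of_memW1p0 (hp : 1 < p) (hΩ : IsOpen Ω) {r : ℝ} (hpr : p ≤ r)
    [IsFiniteMeasure (surf Ω)] (hbd : TraceBounded Ω p r (frontier Ω))
    (hΩb : Bornology.IsBounded Ω) {u : Euc N → ℝ} {g : Euc N → Euc N} {T : Euc N → ℝ}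
    (hT : IsTrace Ω p u g T) (h0 : MemW1p0 Ω p u g) : T =ᵐ[surf Ω] 0 := by
  obtain ⟨hW, φ, hφ, hφW⟩ := h0
  have hr0 : ENNReal.ofReal r ≠ 0 := by simpa using (by linarith : 0 < r)
  obtain ⟨hTr, hlim⟩ := hT.tendsto_eLpNorm hp hpr hbd hΩb hW.1.1 hW.2.1.1
  have h1 := hlim φ (fun n => (hφ n).1) hφW
  have h2 : ∀ n, eLpNorm (fun x => φ n x - T x) (ENNReal.ofReal r) (surf Ω) =
      eLpNorm T (ENNReal.ofReal r) (surf Ω) := by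
    intro n
    rw [← eLpNorm_neg T]
    refine eLpNorm_congr_ae ?_
    filter_upwards [ae_restrict_mem isClosed_frontier.measurableSet] with x hx
    have : φ n x = 0 := image_eq_zero_of_notMem_tsupport fun h =>
      frontier_disjoint_of_isOpen hΩ hx ((hφ n).2.2 h)
    simp [this]
  simp_rw [h2] at h1
  exact (eLpNorm_eq_zero_iff hTr.1 hr0).1 (tendsto_nhds_unique tendsto_const_nhds h1)

end W1p

/-- The Sobolev energy of a smooth function, as a real number. -/
def smoothEnergy {N : ℕ} (Ω : Set (Euc N)) (p : ℝ) (φ : Euc N → ℝ) : ℝ :=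
  ∫ x in Ω, (‖gradient φ x‖ ^ p + ‖φ x‖ ^ p)

section energy

variable {N : ℕ} {Ω : Set (Euc N)} {p : ℝ}

lemma integrableOn_norm_rpow (hΩ : IsOpen Ω) (hb : Bornology.IsBounded Ω) (hp : 0 ≤ p)
    {F : Type*} [NormedAddCommGroup F] {f : Euc N → F} (hf : Continuous f) :
    IntegrableOn (fun x => ‖f x‖ ^ p) Ω :=
  memLp_one_iff_integrable.1 (hb.memLp_restrict (hf.norm.rpow_const fun _ => Or.inr hp)
    hb.measure_lt_top hΩ.measurableSet 1)

lemma integrableOn_smoothEnergy (hΩ : IsOpen Ω) (hb : Bornology.IsBounded Ω) (hp : 0 ≤ p)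
    {φ : Euc N → ℝ} (hφ : ContDiff ℝ ∞ φ) :
    IntegrableOn (fun x => ‖gradient φ x‖ ^ p + ‖φ x‖ ^ p) Ω :=
  (integrableOn_norm_rpow hΩ hb hp (continuous_gradient hφ)).add
    (integrableOn_norm_rpow hΩ hb hp hφ.continuous)

lemma smoothEnergy_nonneg (φ : Euc N → ℝ) : 0 ≤ smoothEnergy Ω p φ :=
  integral_nonneg fun _ => by positivity

lemma sobolevEnergy_gradient (hΩ : IsOpen Ω) (hb : Bornology.IsBounded Ω) (hp : 0 ≤ p)
    {φ : Euc N → ℝ} (hφ : ContDiff ℝ ∞ φ) :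
    sobolevEnergy Ω p φ (gradient φ) = ENNReal.ofReal (smoothEnergy Ω p φ) := by
  rw [smoothEnergy, ofReal_integral_eq_lintegral_ofReal
    (integrableOn_smoothEnergy hΩ hb hp hφ) (ae_of_all _ fun x => by positivity)]
  refine lintegral_congr fun x => ?_
  rw [ENNReal.ofReal_add (by positivity) (by positivity),
    ← ENNReal.ofReal_rpow_of_nonneg (norm_nonneg _) hp,
    ← ENNReal.ofReal_rpow_of_nonneg (norm_nonneg _) hp, ofReal_norm, ofReal_norm]

lemma eLpNorm_le_of_sobolevEnergy_le (hp : 0 < p) {u : Euc N → ℝ} {g : Euc N → Euc N}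
    (hu : AEStronglyMeasurable u (volume.restrict Ω)) {M : ℝ≥0∞} (h : sobolevEnergy Ω p u g ≤ M) :
    eLpNorm u (ENNReal.ofReal p) (volume.restrict Ω) ≤ M ^ (1 / p) ∧
      eLpNorm g (ENNReal.ofReal p) (volume.restrict Ω) ≤ M ^ (1 / p) := by
  rw [sobolevEnergy_eq hp hu] at h
  have hroot : ∀ a : ℝ≥0∞, a ^ p ≤ M → a ≤ M ^ (1 / p) := fun a ha => by
    calc a = (a ^ p) ^ (1 / p) := by
          rw [← ENNReal.rpow_mul, mul_one_div_cancel hp.ne', ENNReal.rpow_one]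
      _ ≤ M ^ (1 / p) := by gcongr
  exact ⟨hroot _ (le_add_self.trans h), hroot _ (le_self_add.trans h)⟩

lemma gradient_half_add {φ ψ : Euc N → ℝ} (hφ : ContDiff ℝ ∞ φ) (hψ : ContDiff ℝ ∞ ψ)
    (x : Euc N) :
    gradient ((1 / 2 : ℝ) • (φ + ψ)) x = (1 / 2 : ℝ) • (gradient φ x + gradient ψ x) := by
  have h1 := hφ.differentiable (by simp) x
  have h2 := hψ.differentiable (by simp) x
  rw [gradient, fderiv_const_smul (h1.add h2), fderiv_add h1 h2, map_smul, map_add]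
  rfl

lemma smoothEnergy_uniformConvex (hΩ : IsOpen Ω) (hb : Bornology.IsBounded Ω) (hp : 1 < p)
    {ε : ℝ} (hε : 0 < ε) :
    ∃ C : ℝ, 0 ≤ C ∧ ∀ φ ∈ {φ : Euc N → ℝ | ContDiff ℝ ∞ φ},
      ∀ ψ ∈ {φ : Euc N → ℝ | ContDiff ℝ ∞ φ}, smoothEnergy Ω p (φ - ψ) ≤
        ε * (smoothEnergy Ω p φ + smoothEnergy Ω p ψ) +
        C * ((smoothEnergy Ω p φ + smoothEnergy Ω p ψ) / 2 -
          smoothEnergy Ω p ((1 / 2 : ℝ) • (φ + ψ))) := by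
  have hp0 : 0 ≤ p := by linarith
  obtain ⟨C₁, hC₁, h₁⟩ := exists_norm_sub_rpow_le (V := ℝ) hp hε
  obtain ⟨C₂, hC₂, h₂⟩ := exists_norm_sub_rpow_le (V := Euc N) hp hε
  refine ⟨C₁ + C₂, by positivity, fun φ hφ ψ hψ => ?_⟩
  have hφ' : ContDiff ℝ ∞ φ := hφ
  have hψ' : ContDiff ℝ ∞ ψ := hψ
  have i1 := integrableOn_smoothEnergy hΩ hb hp0 hφ'
  have i2 := integrableOn_smoothEnergy hΩ hb hp0 hψ'
  have i3 := integrableOn_smoothEnergy (φ := (1 / 2 : ℝ) • (φ + ψ)) hΩ hb hp0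
    ((hφ'.add hψ').const_smul (1 / 2 : ℝ))
  have i4 := integrableOn_smoothEnergy (φ := φ - ψ) hΩ hb hp0 (hφ'.sub hψ')
  set C := C₁ + C₂ with hC
  set e₁ : Euc N → ℝ := fun x => ‖gradient φ x‖ ^ p + ‖φ x‖ ^ p with he₁
  set e₂ : Euc N → ℝ := fun x => ‖gradient ψ x‖ ^ p + ‖ψ x‖ ^ p with he₂
  set e₃ : Euc N → ℝ := fun x => ‖gradient ((1 / 2 : ℝ) • (φ + ψ)) x‖ ^ p +
    ‖((1 / 2 : ℝ) • (φ + ψ)) x‖ ^ p with he₃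
  have i5 : IntegrableOn (fun x => (ε + C / 2) * e₁ x + (ε + C / 2) * e₂ x) Ω :=
    (i1.const_mul _).add (i2.const_mul _)
  have i6 : IntegrableOn (fun x => (ε + C / 2) * e₁ x + (ε + C / 2) * e₂ x - C * e₃ x) Ω :=
    i5.sub (i3.const_mul _)
  have hrhs : ∫ x in Ω, ((ε + C / 2) * e₁ x + (ε + C / 2) * e₂ x - C * e₃ x) =
      ε * (smoothEnergy Ω p φ + smoothEnergy Ω p ψ) + C * ((smoothEnergy Ω p φ +
        smoothEnergy Ω p ψ) / 2 - smoothEnergy Ω p ((1 / 2 : ℝ) • (φ + ψ))) := by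
    rw [integral_sub i5 (i3.const_mul _), integral_add (i1.const_mul _) (i2.const_mul _),
      integral_const_mul, integral_const_mul, integral_const_mul]
    simp only [smoothEnergy, he₁, he₂, he₃]
    ring
  rw [← hrhs]
  refine integral_mono i4 i6 fun x => ?_
  have a1 := h₁ (φ x) (ψ x)
  have a2 := h₂ (gradient φ x) (gradient ψ x)
  have d1 := sub_nonneg.2 (norm_half_add_rpow_le hp (φ x) (ψ x))
  have d2 := sub_nonneg.2 (norm_half_add_rpow_le hp (gradient φ x) (gradient ψ x))
  have hg : gradient (φ - ψ) x = gradient φ x - gradient ψ x := gradient_sub' hφ' hψ' x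
  simp only [he₁, he₂, he₃, hC, hg, gradient_half_add hφ' hψ', Pi.sub_apply, Pi.smul_apply, Pi.add_apply]
  nlinarith [mul_nonneg hC₁ d2, mul_nonneg hC₂ d1]

end energy

section boundary

variable {N : ℕ} {Ω : Set (Euc N)} {p q r : ℝ}

lemma bdryLqPow_eq (hq : 0 < q) (T : Euc N → ℝ) :
    bdryLqPow Ω q T = eLpNorm T (ENNReal.ofReal q) (surf Ω) ^ q := by
  rw [bdryLqPow, eLpNorm_eq_lintegral_rpow_enorm_toReal (by simpa using hq) ENNReal.ofReal_ne_top,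
    ENNReal.toReal_ofReal hq.le, ← ENNReal.rpow_mul, one_div_mul_cancel hq.ne', ENNReal.rpow_one]

lemma surf_apply (A : Set (Euc N)) : surf Ω A = μH[(N : ℝ) - 1] (frontier Ω ∩ A) := by
  rw [surf, Measure.restrict_apply' isClosed_frontier.measurableSet, inter_comm]

lemma nullSingletonClass_surf (hN : 2 ≤ N) : NullSingletonClass (surf Ω) := by
  have hN' : (2 : ℝ) ≤ N := by exact_mod_cast hN
  have := Measure.nullSingletonClass_hausdorff (Euc N) (d := (N : ℝ) - 1) (by linarith)
  rw [surf]
  infer_instance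

lemma frontier_nonempty_of_isBounded (hN : 2 ≤ N) (hb : Bornology.IsBounded Ω)
    (hne : Ω.Nonempty) : (frontier Ω).Nonempty := by
  rw [nonempty_frontier_iff]
  refine ⟨hne, fun h => ?_⟩
  have : Nonempty (Fin N) := ⟨⟨0, by omega⟩⟩
  have : Nontrivial (Euc N) := inferInstance
  exact NormedSpace.unbounded_univ ℝ (Euc N) (h ▸ hb)

/-- The infimum is not trivial: some admissible function has a finite quotient. -/
lemma optTraceConst_lt_top (hN : 2 ≤ N) (hΩ : IsOpen Ω) (hb : Bornology.IsBounded Ω)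
    (hne : Ω.Nonempty) (hs : HasSmoothBoundary Ω) (hp : 1 < p) (hpr : p ≤ r) (hq : 1 ≤ q)
    [IsFiniteMeasure (surf Ω)] (hbd : TraceBounded Ω p r (frontier Ω)) {α : ℝ}
    (hα : α ∈ Ioo (0 : ℝ) 1) : optTraceConst Ω p q α < ⊤ := by
  have hp0 : 0 < p := by linarith
  have := nullSingletonClass_surf (Ω := Ω) hN
  obtain ⟨x₀, hx₀⟩ := frontier_nonempty_of_isBounded hN hb hne
  set h := surf Ω univ with hh
  have hpos : ∀ s : ℝ, 0 < s → 0 < surf Ω (Metric.ball x₀ s) := fun s hs0 => by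
    rw [surf_apply]; exact hausdorffMeasure_frontier_inter_ball_pos hN hΩ hs hx₀ hs0
  have hh0 : 0 < h := (hpos 1 one_pos).trans_le (measure_mono (subset_univ _))
  have hhtop : h ≠ ⊤ := measure_ne_top _ _
  have hsmall : Tendsto (fun n : ℕ => surf Ω (Metric.ball x₀ (1 / ((n : ℝ) + 1)))) atTop (𝓝 0) := by
    rw [← measure_empty (μ := surf Ω)]
    refine tendsto_measure_of_ae_tendsto_indicator_of_isFiniteMeasure _ MeasurableSet.empty
      (fun _ => measurableSet_ball) ?_
    filter_upwards [compl_mem_ae_iff.2 (measure_singleton (μ := surf Ω) x₀)] with x hx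
    have hd : 0 < dist x x₀ := dist_pos.2 hx
    filter_upwards [(tendsto_one_div_add_atTop_nhds_zero_nat (𝕜 := ℝ)).eventually_lt_const hd]
      with n hn
    simp only [Metric.mem_ball, mem_empty_iff_false, iff_false, not_lt]
    exact hn.le
  have hgap : 0 < h - ENNReal.ofReal α * h := by
    rw [tsub_pos_iff_lt]
    calc ENNReal.ofReal α * h < 1 * h :=
          ENNReal.mul_lt_mul_left hh0.ne' hhtop (ENNReal.ofReal_lt_one.2 hα.2)
      _ = h := one_mul h
  obtain ⟨n, hn⟩ := (hsmall.eventually_lt_const hgap).exists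
  set s := 1 / ((n : ℝ) + 1) with hsdef
  have hs0 : 0 < s := by positivity
  obtain ⟨Γ, hΓA, hΓm, hΓ⟩ := exists_measurableSet_subset_measure_eq (surf Ω)
    (A := frontier Ω ∩ (Metric.ball x₀ s)ᶜ) (c := ENNReal.ofReal α * h)
    (isClosed_frontier.measurableSet.inter measurableSet_ball.compl) (by
      have h1 : surf Ω (frontier Ω ∩ (Metric.ball x₀ s)ᶜ) = surf Ω (Metric.ball x₀ s)ᶜ := by
        rw [surf_apply, surf_apply, ← inter_assoc, inter_self]
      have h2 := measure_compl (μ := surf Ω) (measurableSet_ball (x := x₀) (ε := s))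
        (measure_ne_top _ _)
      rw [h1, h2]
      refine ENNReal.le_sub_of_add_le_left (measure_ne_top _ _) ?_
      have h3 : ENNReal.ofReal α * h ≤ h := by
        refine mul_le_of_le_one_left (by simp) (ENNReal.ofReal_le_one.2 hα.2.le)
      calc surf Ω (Metric.ball x₀ s) + ENNReal.ofReal α * h
          ≤ (h - ENNReal.ofReal α * h) + ENNReal.ofReal α * h := by gcongr
        _ = h := tsub_add_cancel_of_le h3)
  let β : ContDiffBump x₀ := ⟨s / 2, s, by positivity, by linarith⟩
  set φ : Euc N → ℝ := fun x => β x with hφdef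
  have hφ : ContDiff ℝ ∞ φ := β.contDiff
  have hmemφ : MemW1p Ω p φ (gradient φ) :=
    ⟨hb.memLp_restrict hφ.continuous hb.measure_lt_top hΩ.measurableSet _,
      hb.memLp_restrict (continuous_gradient hφ) hb.measure_lt_top hΩ.measurableSet _,
      isWeakGradient_gradient hφ⟩
  have hsurf : μH[(N : ℝ) - 1] (frontier Ω) < ⊤ := by
    have := measure_lt_top (surf Ω) univ
    rwa [surf, Measure.restrict_apply_univ] at this
  have htr : IsTrace Ω p φ (gradient φ) φ := by
    refine ⟨(hb.closure.subset frontier_subset_closure).memLp_restrict hφ.continuous hsurf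
      isClosed_frontier.measurableSet _, fun _ => φ, fun _ => hφ, ⟨?_, ?_⟩, ?_⟩ <;> simp
  have hnz : ¬ φ =ᵐ[surf Ω] 0 := by
    intro h0
    have h1 : surf Ω (Metric.ball x₀ (s / 2)) = 0 := by
      refine measure_mono_null (fun x hx => ?_) (ae_iff.1 h0)
      have : φ x = 1 := β.one_of_mem_closedBall (Metric.ball_subset_closedBall hx)
      simp [this]
    exact (hpos (s / 2) (by positivity)).ne' h1
  have hadm : Admissible Ω p φ (gradient φ) φ :=
    ⟨hmemφ, fun h0 => hnz (htr.ae_eq_zero_of_memW1p0 hp hΩ hpr hbd hb h0), htr⟩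
  have hquot : rayleighQuot Ω p q φ (gradient φ) φ < ⊤ := by
    refine ENNReal.div_lt_top ?_ ?_
    · rw [sobolevEnergy_gradient hΩ hb hp0.le hφ]; exact ENNReal.ofReal_ne_top
    · have hq0 : 0 < q := by linarith
      have hne0 : bdryLqPow Ω q φ ≠ 0 := by
        rw [bdryLqPow_eq hq0, Ne, ENNReal.rpow_eq_zero_iff_of_pos hq0,
          eLpNorm_eq_zero_iff htr.1.1 (by simpa using hq0)]
        exact hnz
      rw [Ne, ENNReal.rpow_eq_zero_iff_of_pos (by positivity)]
      exact hne0
  refine lt_of_le_of_lt (sInf_le ⟨Γ, hΓA.trans inter_subset_left, hΓm.nullMeasurableSet, ?_, rfl⟩)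
    (lt_of_le_of_lt (sInf_le ⟨φ, gradient φ, φ, hadm, ae_of_all _ fun x hx => ?_, rfl⟩) hquot)
  · have h1 : surf Ω Γ = μH[(N : ℝ) - 1] Γ := by
      rw [surf_apply, inter_eq_right.2 (hΓA.trans inter_subset_left)]
    rw [← h1, hΓ, hh, surf, Measure.restrict_apply_univ]
  · have hx' := (hΓA hx).2
    exact β.zero_of_le_dist (not_lt.1 hx')

end boundary

section minimizing

variable {N : ℕ} {Ω : Set (Euc N)} {p q r α : ℝ}

lemma gradient_const_smul' {φ : Euc N → ℝ} (hφ : ContDiff ℝ ∞ φ) (c : ℝ) (x : Euc N) :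
    gradient (fun x => c * φ x) x = c • gradient φ x := by
  have h1 := hφ.differentiable (by simp) x
  rw [gradient, fderiv_const_mul h1, map_smul]
  rfl

lemma sobolevEnergy_const_mul (hp : 0 ≤ p) {φ : Euc N → ℝ} (hφ : ContDiff ℝ ∞ φ) {c : ℝ}
    (hc : 0 ≤ c) :
    sobolevEnergy Ω p (fun x => c * φ x) (gradient fun x => c * φ x) =
      ENNReal.ofReal (c ^ p) * sobolevEnergy Ω p φ (gradient φ) := by
  unfold sobolevEnergy
  rw [← lintegral_const_mul' _ _ ENNReal.ofReal_ne_top]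
  refine lintegral_congr fun x => ?_
  rw [gradient_const_smul' hφ, enorm_smul, enorm_mul, ENNReal.mul_rpow_of_nonneg _ _ hp,
    ENNReal.mul_rpow_of_nonneg _ _ hp, ← mul_add, ← ofReal_norm, Real.norm_of_nonneg hc,
    ENNReal.ofReal_rpow_of_nonneg hc hp]

lemma bdryLqPow_const_mul (hq : 0 ≤ q) (T : Euc N → ℝ) {c : ℝ} (hc : 0 ≤ c) :
    bdryLqPow Ω q (fun x => c * T x) = ENNReal.ofReal (c ^ q) * bdryLqPow Ω q T := by
  unfold bdryLqPow
  rw [← lintegral_const_mul' _ _ ENNReal.ofReal_ne_top]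
  refine lintegral_congr fun x => ?_
  rw [enorm_mul, ENNReal.mul_rpow_of_nonneg _ _ hq, ← ofReal_norm, Real.norm_of_nonneg hc,
    ENNReal.ofReal_rpow_of_nonneg hc hq]

/-- Smooth functions with normalized boundary values, almost vanishing on a large set, and with
almost minimal energy. -/
lemma exists_smooth_almost_minimizer (hΩ : IsOpen Ω) (hb : Bornology.IsBounded Ω)
    (hp : 1 < p) (hpr : p ≤ r) (hq : 1 ≤ q) (hqr : q ≤ r) [IsFiniteMeasure (surf Ω)]
    (hbd : TraceBounded Ω p r (frontier Ω)) (hfin : optTraceConst Ω p q α < ⊤)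
    {η : ℝ} (hη : 0 < η) :
    ∃ ψ t : Euc N → ℝ, ContDiff ℝ ∞ ψ ∧ MemLp t (ENNReal.ofReal r) (surf Ω) ∧
      eLpNorm (fun x => ψ x - t x) (ENNReal.ofReal r) (surf Ω) ≤ ENNReal.ofReal η ∧
      bdryLqPow Ω q t = 1 ∧
      surf Ω {x | t x ≠ 0} ≤ surf Ω univ - ENNReal.ofReal α * surf Ω univ ∧
      smoothEnergy Ω p ψ ≤ (optTraceConst Ω p q α).toReal + η := by
  set l := optTraceConst Ω p q α with hl
  have hp0 : 0 < p := by linarith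
  have hq0 : 0 < q := by linarith
  have hlt : l < l + ENNReal.ofReal η :=
    ENNReal.lt_add_right hfin.ne (by simpa using hη)
  obtain ⟨_, ⟨Γ, hΓΩ, hΓm, hΓ, rfl⟩, h1⟩ := sInf_lt_iff.1 hlt
  obtain ⟨_, ⟨u, g, T, hadm, hTΓ, rfl⟩, h2⟩ := sInf_lt_iff.1 h1
  obtain ⟨hW, hW0, hT⟩ := hadm
  obtain ⟨hTr, hTlim⟩ := hT.tendsto_eLpNorm hp hpr hbd hb hW.1.1 hW.2.1.1
  set b := bdryLqPow Ω q T with hbdef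
  have hbtop : b ≠ ⊤ := by
    rw [hbdef, bdryLqPow_eq hq0]
    exact ENNReal.rpow_ne_top_of_nonneg hq0.le
      (hTr.mono_exponent (ENNReal.ofReal_le_ofReal hqr)).eLpNorm_ne_top
  have hb0 : b ≠ 0 := by
    intro h0
    apply hW0
    refine memW1p0_of_sobolevEnergy_eq_zero hp0 hW ?_
    by_contra hE
    rw [rayleighQuot, ← hbdef, h0, ENNReal.zero_rpow_of_pos (by positivity),
      ENNReal.div_zero hE] at h2
    exact not_top_lt h2
  have hbr : 0 < b.toReal := ENNReal.toReal_pos hb0 hbtop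
  set c := b.toReal ^ (-(1 / q)) with hc
  have hc0 : 0 < c := Real.rpow_pos_of_pos hbr _
  have hcp : ∀ s : ℝ, ENNReal.ofReal (c ^ s) = (b ^ (s / q))⁻¹ := by
    intro s
    rw [hc, ← Real.rpow_mul hbr.le, ← ENNReal.ofReal_rpow_of_pos hbr, ENNReal.ofReal_toReal hbtop,
      ← ENNReal.rpow_neg]
    congr 1; ring
  have hquot : ENNReal.ofReal (c ^ p) * sobolevEnergy Ω p u g < l + ENNReal.ofReal η := by
    rw [hcp, mul_comm, ← div_eq_mul_inv]; exact h2
  obtain ⟨φ, hφ, hφW, -⟩ := hT.2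
  have hlim1 : Tendsto (fun n => sobolevEnergy Ω p (fun x => c * φ n x)
      (gradient fun x => c * φ n x)) atTop (𝓝 (ENNReal.ofReal (c ^ p) * sobolevEnergy Ω p u g)) := by
    simp_rw [fun n => sobolevEnergy_const_mul (Ω := Ω) hp0.le (hφ n) hc0.le]
    exact ENNReal.Tendsto.const_mul (tendsto_sobolevEnergy hp.le hφ hW.1 hW.2.1 hφW)
      (Or.inr ENNReal.ofReal_ne_top)
  have hlim2 : Tendsto (fun n => eLpNorm (fun x => c * φ n x - c * T x) (ENNReal.ofReal r) (surf Ω))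
      atTop (𝓝 0) := by
    have h3 : ∀ n, eLpNorm (fun x => c * φ n x - c * T x) (ENNReal.ofReal r) (surf Ω) =
        ‖c‖ₑ * eLpNorm (fun x => φ n x - T x) (ENNReal.ofReal r) (surf Ω) := by
      intro n
      rw [← eLpNorm_const_smul]
      congr 1; ext x; simp [mul_sub]
    simp_rw [h3]
    simpa using ENNReal.Tendsto.const_mul (hTlim φ hφ hφW) (a := ‖c‖ₑ) (Or.inr enorm_ne_top)
  obtain ⟨n, hn1, hn2⟩ := ((hlim1.eventually_lt_const hquot).and
    (hlim2.eventually_le_const (ENNReal.ofReal_pos.2 hη))).exists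
  have hsm : ContDiff ℝ ∞ fun x => c * φ n x := contDiff_const.mul (hφ n)
  refine ⟨fun x => c * φ n x, fun x => c * T x, hsm, hTr.const_mul c, hn2, ?_, ?_, ?_⟩
  · rw [bdryLqPow_const_mul hq0.le T hc0.le, hcp, div_self hq0.ne', ENNReal.rpow_one]
    exact ENNReal.inv_mul_cancel hb0 hbtop
  · have h3 : {x | c * T x ≠ 0} = {x | T x ≠ 0} := by
      ext x; simp [hc0.ne']
    have huniv : surf Ω univ = μH[(N : ℝ) - 1] (frontier Ω) := by rw [surf_apply, inter_univ]
    have hfin' : μH[(N : ℝ) - 1] (frontier Ω) ≠ ⊤ := by rw [← huniv]; exact measure_ne_top _ _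
    rw [h3, surf_apply, huniv, ← hΓ]
    refine ENNReal.le_sub_of_add_le_right (ne_top_of_le_ne_top hfin' (measure_mono hΓΩ)) ?_
    have h4 : μH[(N : ℝ) - 1] (frontier Ω ∩ {x | T x ≠ 0}) ≤
        μH[(N : ℝ) - 1] (frontier Ω \ Γ) := by
      refine measure_mono_ae ?_
      filter_upwards [hTΓ] with x hx hxm
      exact ⟨hxm.1, fun hxΓ => hxm.2 (hx hxΓ)⟩
    calc μH[(N : ℝ) - 1] (frontier Ω ∩ {x | T x ≠ 0}) + μH[(N : ℝ) - 1] Γ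
        ≤ μH[(N : ℝ) - 1] (frontier Ω \ Γ) + μH[(N : ℝ) - 1] (frontier Ω ∩ Γ) := by
          rw [inter_eq_right.2 hΓΩ]; gcongr
      _ = μH[(N : ℝ) - 1] (frontier Ω) := by
          rw [add_comm]; exact measure_inter_add_sdiff₀ _ hΓm
  · rw [sobolevEnergy_gradient hΩ hb hp0.le hsm] at hn1
    have h3 := (ENNReal.ofReal_le_iff_le_toReal
      (ENNReal.add_ne_top.2 ⟨hfin.ne, ENNReal.ofReal_ne_top⟩)).1 hn1.le
    rwa [ENNReal.toReal_add hfin.ne ENNReal.ofReal_ne_top, ENNReal.toReal_ofReal hη.le] at h3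

lemma measure_ne_zero_le_of_tendsto_ae {X : Type*} [MeasurableSpace X] {μ : Measure X}
    {f : ℕ → X → ℝ} {g : X → ℝ} (h : ∀ᵐ x ∂μ, Tendsto (fun n => f n x) atTop (𝓝 (g x)))
    {c : ℝ≥0∞} (hc : ∀ n, μ {x | f n x ≠ 0} ≤ c) : μ {x | g x ≠ 0} ≤ c := by
  set B : ℕ → Set X := fun n => {x | ∀ k, n ≤ k → f k x ≠ 0}
  have hB : Monotone B := fun m n hmn x hx k hk => hx k (hmn.trans hk)
  calc μ {x | g x ≠ 0} ≤ μ (⋃ n, B n) := by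
        refine measure_mono_ae ?_
        filter_upwards [h] with x hx hxg
        obtain ⟨n, hn⟩ := eventually_atTop.1 (hx.eventually_ne hxg)
        exact mem_iUnion.2 ⟨n, hn⟩
    _ = ⨆ n, μ (B n) := hB.measure_iUnion
    _ ≤ c := iSup_le fun n => (measure_mono (fun x hx => hx n le_rfl : B n ⊆ {x | f n x ≠ 0})).trans (hc n)

lemma eLpNorm_convexHull_sub_le {X : Type*} [MeasurableSpace X] {μ : Measure X} {r : ℝ≥0∞}
    (hr : 1 ≤ r) {S : Set (X → ℝ)} {t : X → ℝ} (ht : AEStronglyMeasurable t μ) {δ : ℝ≥0∞}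
    (hS : ∀ f ∈ S, AEStronglyMeasurable f μ ∧ eLpNorm (fun x => f x - t x) r μ ≤ δ)
    {w : X → ℝ} (hw : w ∈ convexHull ℝ S) : eLpNorm (fun x => w x - t x) r μ ≤ δ := by
  have hconv : Convex ℝ {f : X → ℝ | AEStronglyMeasurable f μ ∧
      eLpNorm (fun x => f x - t x) r μ ≤ δ} := by
    intro f hf g hg a b ha hb hab
    refine ⟨(hf.1.const_smul a).add (hg.1.const_smul b), ?_⟩
    have heq : (fun x => (a • f + b • g) x - t x) =
        (a • fun x => f x - t x) + b • fun x => g x - t x := by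
      ext x
      simp only [Pi.add_apply, Pi.smul_apply, smul_eq_mul]
      linear_combination t x * hab
    rw [heq]
    refine (eLpNorm_add_le ((hf.1.sub ht).const_smul a) ((hg.1.sub ht).const_smul b) hr).trans ?_
    rw [eLpNorm_const_smul, eLpNorm_const_smul]
    calc ‖a‖ₑ * eLpNorm (fun x => f x - t x) r μ + ‖b‖ₑ * eLpNorm (fun x => g x - t x) r μ
        ≤ ‖a‖ₑ * δ + ‖b‖ₑ * δ := by gcongr; exacts [hf.2, hg.2]
      _ = δ := by
          rw [← add_mul, ← ofReal_norm, ← ofReal_norm, Real.norm_of_nonneg ha,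
            Real.norm_of_nonneg hb, ← ENNReal.ofReal_add ha hb, hab, ENNReal.ofReal_one, one_mul]
  exact (convexHull_min hS hconv hw).2

lemma convex_setOf_contDiff : Convex ℝ {φ : Euc N → ℝ | ContDiff ℝ ∞ φ} := by
  intro f hf g hg a b _ _ _
  exact (ContDiff.const_smul a (mem_ofPred_eq ▸ hf)).add (ContDiff.const_smul b (mem_ofPred_eq ▸ hg))

lemma subcritical_max_exponent (hN : 2 ≤ N) (hp : 1 < p)
    (hsub : p < (N : ℝ) → q < p * ((N : ℝ) - 1) / ((N : ℝ) - p)) :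
    (N : ℝ) / p - ((N : ℝ) - 1) / max p q < 1 := by
  have hN' : (2 : ℝ) ≤ N := by exact_mod_cast hN
  have hp0 : 0 < p := by linarith
  have hr0 : 0 < max p q := lt_of_lt_of_le hp0 (le_max_left _ _)
  rcases lt_or_ge p N with hpN | hpN
  · have hd : 0 < (N : ℝ) - p := by linarith
    have h1 : max p q < p * ((N : ℝ) - 1) / ((N : ℝ) - p) := by
      refine max_lt ?_ (hsub hpN)
      rw [lt_div_iff₀ hd]
      exact mul_lt_mul_of_pos_left (by linarith) hp0
    rw [lt_div_iff₀ hd] at h1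
    have h2 : ((N : ℝ) - p) / p < ((N : ℝ) - 1) / max p q := by
      rw [div_lt_div_iff₀ hp0 hr0]; linarith
    rw [sub_div, div_self hp0.ne'] at h2
    linarith
  · have h1 : (N : ℝ) / p ≤ 1 := (div_le_one hp0).2 hpN
    have h2 : 0 < ((N : ℝ) - 1) / max p q := div_pos (by linarith) hr0
    linarith

end minimizing

end

/-- For every `α ∈ (0,1)` there is `u ∈ W^{1,p}(Ω) \ W^{1,p}_0(Ω)` (with weak gradient `g` and
trace `T`) whose trace vanishes on a subset of `∂Ω` of `H^{N-1}`-measure at least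
`α H^{N-1}(∂Ω)` and whose Rayleigh quotient (with positive finite denominator) equals `𝒮(α)`. -/
theorem exists_extremal_optTraceConst {N : ℕ} (hN : 2 ≤ N) (Ω : Set (Euc N))
    (hΩo : IsOpen Ω) (hΩb : Bornology.IsBounded Ω) (hΩc : IsConnected Ω)
    (hΩs : HasSmoothBoundary Ω)
    (p q : ℝ) (hp : 1 < p) (hq : 1 ≤ q)
    (hsub : p < (N : ℝ) → q < p * ((N : ℝ) - 1) / ((N : ℝ) - p))
    (α : ℝ) (hα : α ∈ Set.Ioo (0 : ℝ) 1) :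
    ∃ (u : Euc N → ℝ) (g : Euc N → Euc N) (T : Euc N → ℝ),
      Admissible Ω p u g T ∧
      ENNReal.ofReal α * μH[(N : ℝ) - 1] (frontier Ω) ≤
        μH[(N : ℝ) - 1] {x ∈ frontier Ω | T x = 0} ∧
      0 < bdryLqPow Ω q T ∧ bdryLqPow Ω q T < ⊤ ∧
      optTraceConst Ω p q α = rayleighQuot Ω p q u g T := by
  set r := max p q
  have hpr : p ≤ r := le_max_left _ _
  have hqr : q ≤ r := le_max_right _ _
  have hp0 : 0 < p := by linarith
  have hq0 : 0 < q := by linarith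
  have hp1 : 1 ≤ ENNReal.ofReal p := by simpa using hp.le
  have hq1 : 1 ≤ ENNReal.ofReal q := by simpa using hq
  have hr1 : 1 ≤ ENNReal.ofReal r := by simpa using hp.le.trans hpr
  obtain ⟨hHfin, hbd, hcpt⟩ := traceBounded_frontier hN hΩo hΩb hΩs hp hpr
    (subcritical_max_exponent hN hp hsub)
  have huniv : surf Ω univ = μH[(N : ℝ) - 1] (frontier Ω) := by rw [surf_apply, inter_univ]
  have : IsFiniteMeasure (surf Ω) := ⟨by rw [huniv]; exact hHfin⟩
  have := nullSingletonClass_surf (Ω := Ω) hN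
  have hfin : optTraceConst Ω p q α < ⊤ :=
    optTraceConst_lt_top hN hΩo hΩb hΩc.nonempty hΩs hp hpr hq hbd hα
  have hsmem : ∀ φ : Euc N → ℝ, ContDiff ℝ ∞ φ → ∀ s, MemLp φ s (surf Ω) := fun φ hφ s =>
    (hΩb.closure.subset frontier_subset_closure).memLp_restrict hφ.continuous hHfin
      isClosed_frontier.measurableSet s
  set l := optTraceConst Ω p q α with hldef
  -- a minimizing sequence of smooth functions
  choose ψ t hψ ht hψt htq htz hψE using fun k : ℕ => exists_smooth_almost_minimizer
    (α := α) hΩo hΩb hp hpr hq hqr hbd hfin (η := 1 / ((k : ℝ) + 1)) (by positivity)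
  have hW : ∀ φ : Euc N → ℝ, ContDiff ℝ ∞ φ → ∀ M, smoothEnergy Ω p φ ≤ M →
      eLpNorm φ (ENNReal.ofReal p) (volume.restrict Ω) ≤ ENNReal.ofReal M ^ (1 / p) ∧
      eLpNorm (gradient φ) (ENNReal.ofReal p) (volume.restrict Ω) ≤
        ENNReal.ofReal M ^ (1 / p) := fun φ hφ M hM =>
    eLpNorm_le_of_sobolevEnergy_le hp0 hφ.continuous.aestronglyMeasurable (by
      rw [sobolevEnergy_gradient hΩo hΩb hp0.le hφ]; exact ENNReal.ofReal_le_ofReal hM)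
  have hMtop : ∀ M : ℝ, ENNReal.ofReal M ^ (1 / p) ≠ ⊤ := fun M =>
    ENNReal.rpow_ne_top_of_nonneg (by positivity) ENNReal.ofReal_ne_top
  obtain ⟨ns, hns, hcau⟩ := hcpt ψ hψ
    (ENNReal.ofReal (l.toReal + 1) ^ (1 / p) + ENNReal.ofReal (l.toReal + 1) ^ (1 / p))
    (ENNReal.add_ne_top.2 ⟨hMtop _, hMtop _⟩) fun k => by
      have h1 := hW (ψ k) (hψ k) (l.toReal + 1) ((hψE k).trans (by
        gcongr
        rw [div_le_one (by positivity)]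
        linarith [(Nat.cast_nonneg k : (0 : ℝ) ≤ k)]))
      exact add_le_add h1.1 h1.2
  obtain ⟨T, hTsm, hTr, hTlim⟩ := exists_tendsto_eLpNorm_of_cauchy hr1
    (fun k => hsmem _ (hψ (ns k)) (ENNReal.ofReal r)) hcau
  have hone : Tendsto (fun k : ℕ => ENNReal.ofReal (1 / ((ns k : ℝ) + 1))) atTop (𝓝 0) := by
    have := ENNReal.tendsto_ofReal
      ((tendsto_one_div_add_atTop_nhds_zero_nat (𝕜 := ℝ)).comp hns.tendsto_atTop)
    rwa [ENNReal.ofReal_zero] at this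
  have htT : Tendsto (fun k => eLpNorm (fun x => t (ns k) x - T x) (ENNReal.ofReal r) (surf Ω))
      atTop (𝓝 0) := by
    have hsum := hTlim.add hone
    rw [add_zero] at hsum
    refine tendsto_of_tendsto_of_tendsto_of_le_of_le tendsto_const_nhds hsum
      (fun k => by simp) fun k => ?_
    refine le_trans (le_of_eq ?_) ((eLpNorm_sub_le ((hsmem _ (hψ (ns k)) (ENNReal.ofReal r)).1.sub
      hTr.1) ((hsmem _ (hψ (ns k)) (ENNReal.ofReal r)).1.sub (ht (ns k)).1) hr1).trans
        (add_le_add le_rfl (hψt (ns k))))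
    congr 1; ext x; simp
  -- the constraints pass to the limit
  have hTq : bdryLqPow Ω q T = 1 := by
    have h1 := tendsto_eLpNorm_of_exponent_le (ENNReal.ofReal_le_ofReal hqr)
      (fun k => (ht (ns k)).1.sub hTr.1) htT hq1 ENNReal.ofReal_ne_top
    have h2 := tendsto_eLpNorm_of_tendsto_eLpNorm_sub hq1 (fun k => (ht (ns k)).1)
      (hTr.mono_exponent (ENNReal.ofReal_le_ofReal hqr)) h1
    have h3 := ((ENNReal.continuous_rpow_const (y := q)).tendsto _).comp h2
    rw [← bdryLqPow_eq hq0] at h3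
    refine tendsto_nhds_unique h3 (tendsto_const_nhds.congr fun k => ?_)
    simp only [Function.comp]
    rw [← bdryLqPow_eq hq0, htq]
  have hTz : surf Ω {x | T x ≠ 0} ≤ surf Ω univ - ENNReal.ofReal α * surf Ω univ := by
    obtain ⟨ms, -, hms⟩ := (tendstoInMeasure_of_tendsto_eLpNorm (by positivity)
      (fun k => (ht (ns k)).1) hTr.1 htT).exists_seq_tendsto_ae
    exact measure_ne_zero_le_of_tendsto_ae hms fun k => htz _
  have hαle : ENNReal.ofReal α * surf Ω univ ≤ surf Ω univ :=
    mul_le_of_le_one_left (by simp) (ENNReal.ofReal_le_one.2 hα.2.le)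
  have hzero : ENNReal.ofReal α * surf Ω univ ≤ surf Ω {x | T x = 0} := by
    have h1 : surf Ω univ ≤ surf Ω {x | T x = 0} + surf Ω {x | T x ≠ 0} := by
      refine (measure_mono fun x _ => ?_).trans (measure_union_le _ _)
      exact em (T x = 0)
    have h2 : ENNReal.ofReal α * surf Ω univ + (surf Ω univ - ENNReal.ofReal α * surf Ω univ) ≤
        surf Ω {x | T x = 0} + (surf Ω univ - ENNReal.ofReal α * surf Ω univ) := by
      rw [add_tsub_cancel_of_le hαle]
      exact h1.trans (by gcongr)
    exact (ENNReal.add_le_add_iff_right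
      (ne_top_of_le_ne_top (measure_ne_top (surf Ω) univ) tsub_le_self)).1 h2
  -- strongly convergent convex combinations
  obtain ⟨w, hwmem, hwcau, hwE⟩ := exists_convexHull_cauchy (smoothEnergy Ω p)
    {φ : Euc N → ℝ | ContDiff ℝ ∞ φ}
    convex_setOf_contDiff
    (fun φ _ => smoothEnergy_nonneg φ) (fun ε hε => smoothEnergy_uniformConvex hΩo hΩb hp hε)
    (fun k => ψ (ns k)) (fun k => hψ _) l.toReal fun ε hε => by
      filter_upwards [((tendsto_one_div_add_atTop_nhds_zero_nat (𝕜 := ℝ)).comp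
        hns.tendsto_atTop).eventually_le_const hε] with k hk
      exact (hψE (ns k)).trans (by gcongr; exact hk)
  have hwsm : ∀ n, ContDiff ℝ ∞ (w n) := fun n =>
    convexHull_min (by rintro _ ⟨k, -, rfl⟩; exact hψ _)
      convex_setOf_contDiff (hwmem n)
  have hwT : Tendsto (fun n => eLpNorm (fun x => w n x - T x) (ENNReal.ofReal r) (surf Ω))
      atTop (𝓝 0) := by
    rw [ENNReal.tendsto_nhds_zero]
    intro δ hδ
    obtain ⟨n₀, hn₀⟩ := eventually_atTop.1 (ENNReal.tendsto_nhds_zero.1 hTlim δ hδ)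
    filter_upwards [eventually_ge_atTop n₀] with n hn
    refine eLpNorm_convexHull_sub_le hr1 hTr.1 ?_ (hwmem n)
    rintro _ ⟨k, hk, rfl⟩
    exact ⟨(hsmem _ (hψ (ns k)) (ENNReal.ofReal r)).1, hn₀ k (hn.trans hk)⟩
  have hwcau' : ∀ δ : ℝ≥0∞, 0 < δ → ∃ n₀, ∀ m, n₀ ≤ m → ∀ n, n₀ ≤ n →
      eLpNorm (fun x => w m x - w n x) (ENNReal.ofReal p) (volume.restrict Ω) ≤ δ ∧
      eLpNorm (fun x => gradient (w m) x - gradient (w n) x) (ENNReal.ofReal p)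
        (volume.restrict Ω) ≤ δ := by
    intro δ hδ
    obtain ⟨ε, hε, hεδ⟩ : ∃ ε : ℝ, 0 < ε ∧ ENNReal.ofReal ε ^ (1 / p) ≤ δ := by
      rcases eq_or_ne δ ⊤ with rfl | hδt
      · exact ⟨1, one_pos, le_top⟩
      have hδr := ENNReal.toReal_pos hδ.ne' hδt
      refine ⟨δ.toReal ^ p, Real.rpow_pos_of_pos hδr p, ?_⟩
      rw [← ENNReal.ofReal_rpow_of_pos hδr, ENNReal.ofReal_toReal hδt, ← ENNReal.rpow_mul,
        mul_one_div_cancel hp0.ne', ENNReal.rpow_one]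
    obtain ⟨n₀, hn₀⟩ := hwcau ε hε
    refine ⟨n₀, fun m hm n hn => ?_⟩
    have h1 := hW (w m - w n) ((hwsm m).sub (hwsm n)) ε (hn₀ m hm n hn)
    refine ⟨h1.1.trans hεδ, le_trans (le_of_eq ?_) (h1.2.trans hεδ)⟩
    congr 1
    funext x
    exact (gradient_sub' (hwsm m) (hwsm n) x).symm
  obtain ⟨u, -, hu, hulim⟩ := exists_tendsto_eLpNorm_of_cauchy hp1
    (fun n => hΩb.memLp_restrict (hwsm n).continuous hΩb.measure_lt_top hΩo.measurableSet
      (ENNReal.ofReal p)) fun δ hδ => by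
        obtain ⟨n₀, hn₀⟩ := hwcau' δ hδ
        exact ⟨n₀, fun m hm n hn => (hn₀ m hm n hn).1⟩
  obtain ⟨g, -, hg, hglim⟩ := exists_tendsto_eLpNorm_of_cauchy hp1
    (fun n => hΩb.memLp_restrict (continuous_gradient (hwsm n)) hΩb.measure_lt_top
      hΩo.measurableSet (ENNReal.ofReal p)) fun δ hδ => by
        obtain ⟨n₀, hn₀⟩ := hwcau' δ hδ
        exact ⟨n₀, fun m hm n hn => (hn₀ m hm n hn).2⟩
  have hwW : TendstoW1p Ω p w u g := ⟨hulim, hglim⟩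
  have htr : IsTrace Ω p u g T :=
    ⟨hTr.mono_exponent (ENNReal.ofReal_le_ofReal hpr), w, hwsm, hwW,
      tendsto_eLpNorm_of_exponent_le (ENNReal.ofReal_le_ofReal hpr)
        (fun n => (hsmem _ (hwsm n) (ENNReal.ofReal r)).1.sub hTr.1) hwT hp1
        ENNReal.ofReal_ne_top⟩
  have hmem : MemW1p Ω p u g :=
    ⟨hu, hg, isWeakGradient_of_tendstoW1p hΩo hΩb hp.le hwsm hu hg hwW⟩
  have hadm : Admissible Ω p u g T := by
    refine ⟨hmem, fun h0 => ?_, htr⟩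
    have h1 := htr.ae_eq_zero_of_memW1p0 hp hΩo hpr hbd hΩb h0
    rw [bdryLqPow_eq hq0, eLpNorm_congr_ae h1, eLpNorm_zero, ENNReal.zero_rpow_of_pos hq0] at hTq
    exact zero_ne_one hTq
  have hquot : rayleighQuot Ω p q u g T = sobolevEnergy Ω p u g := by
    rw [rayleighQuot, hTq, ENNReal.one_rpow, div_one]
  have hle : sobolevEnergy Ω p u g ≤ l := by
    refine ENNReal.le_of_forall_pos_le_add fun ε hε _ => ?_
    refine le_of_tendsto (tendsto_sobolevEnergy hp.le hwsm hu hg hwW) ?_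
    filter_upwards [hwE ε hε] with n hn
    rw [sobolevEnergy_gradient hΩo hΩb hp0.le (hwsm n)]
    refine (ENNReal.ofReal_le_ofReal hn).trans ?_
    rw [ENNReal.ofReal_add ENNReal.toReal_nonneg ε.coe_nonneg, ENNReal.ofReal_toReal hfin.ne,
      ENNReal.ofReal_coe_nnreal]
  refine ⟨u, g, T, hadm, ?_, by rw [hTq]; exact one_pos, by rw [hTq]; exact ENNReal.one_lt_top, ?_⟩
  · rw [← huniv]
    exact hzero.trans_eq (surf_apply _)
  · refine le_antisymm ?_ (hquot ▸ hle)
    obtain ⟨Γ, hΓA, hΓm, hΓ⟩ := exists_measurableSet_subset_measure_eq (surf Ω)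
      (A := frontier Ω ∩ {x | T x = 0}) (c := ENNReal.ofReal α * surf Ω univ)
      (isClosed_frontier.measurableSet.inter
        (hTsm.measurable (measurableSet_singleton (0 : ℝ)))) (by
          rw [surf_apply (frontier Ω ∩ _), ← inter_assoc, inter_self, ← surf_apply]
          exact hzero)
    have hΓΩ : Γ ⊆ frontier Ω := hΓA.trans inter_subset_left
    have h1 : traceConst Ω p q Γ ≤ rayleighQuot Ω p q u g T :=
      sInf_le ⟨u, g, T, hadm, ae_of_all _ fun x hx => (hΓA hx).2, rfl⟩
    refine le_trans (sInf_le ⟨Γ, hΓΩ, hΓm.nullMeasurableSet, ?_, rfl⟩) h1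
    rw [← huniv, ← hΓ, surf_apply, inter_eq_right.2 hΓΩ]
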